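/- arXiv:2406.10195 — 8 statements merged into one kernel-verified Lean document; each statement's English description precedes it below -/
import Mathlib

section
/- A tensor sequence A_1, …, A_N generates a matrix-product unitary if and only if for every string (α_1, …, α_N) ∈ {0, 1, …, d²−1}^N the product S_{α_N}^{(N)} ⋯ S_{α_2}^{(2)} S_{α_1}^{(1)} (a 1×1 matrix, since D_0 = D_N = 1, identified with a scalar) equals 1 when all α_k = 0, and equals 0 otherwise. -/
open Matrix Kronecker

noncomputable section

/-- The partial matrix product `A_k^{i_k j_k} ⋯ A_1^{i_1 j_1}` of a tensor sequence
(sites are 0-based: `A m` is the tensor of site `m+1`). -/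
def mpoProd (d : ℕ) (D : ℕ → ℕ)
    (A : ∀ k : ℕ, Fin d → Fin d → Matrix (Fin (D (k + 1))) (Fin (D k)) ℂ) :
    ∀ N : ℕ, (Fin N → Fin d) → (Fin N → Fin d) → Matrix (Fin (D N)) (Fin (D 0)) ℂ
  | 0, _, _ => 1
  | (N + 1), i, j =>
      A N (i (Fin.last N)) (j (Fin.last N)) *
        mpoProd d D A N (fun t => i t.castSucc) (fun t => j t.castSucc)

/-- The matrix-product operator generated by the tensor sequence, acting on `(ℂ^d)^{⊗N}`;
since `D 0 = D N = 1`, the `1 × 1` boundary matrix is identified with a scalar by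
summing its entries. -/
def mpoOp (d : ℕ) (D : ℕ → ℕ)
    (A : ∀ k : ℕ, Fin d → Fin d → Matrix (Fin (D (k + 1))) (Fin (D k)) ℂ) (N : ℕ) :
    Matrix (Fin N → Fin d) (Fin N → Fin d) ℂ :=
  Matrix.of fun i j => ∑ m, ∑ n, mpoProd d D A N i j m n

/-- `∑ i j j', M j' j • conj(A^{i j'}) ⊗ conj?  -- the building block
`Σ_{i,j,j'} (M)_{j'j} · conj(A^{ij'}) ⊗ A^{ij}` (Kronecker product, entrywise conjugate). -/
def Smat {d Dl Dr : ℕ} (A : Fin d → Fin d → Matrix (Fin Dl) (Fin Dr) ℂ)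
    (M : Matrix (Fin d) (Fin d) ℂ) : Matrix (Fin Dl × Fin Dl) (Fin Dr × Fin Dr) ℂ :=
  ∑ i, ∑ j, ∑ j', M j' j • (((A i j').map (starRingEnd ℂ)) ⊗ₖ (A i j))

/-- The transfer matrix `E^{(k+1)} = (1/d) Σ_{i,j} conj(A_k^{ij}) ⊗ A_k^{ij}`. -/
def Esite (d : ℕ) (D : ℕ → ℕ)
    (A : ∀ k : ℕ, Fin d → Fin d → Matrix (Fin (D (k + 1))) (Fin (D k)) ℂ) (k : ℕ) :
    Matrix (Fin (D (k + 1)) × Fin (D (k + 1))) (Fin (D k) × Fin (D k)) ℂ :=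
  ((d : ℂ))⁻¹ • Smat (A k) 1

/-- `S_α^{(k+1)}`, where `α = 0` carries the extra `1/d` factor (there `σ 0 = 𝟙`). -/
def Ssite (d : ℕ) (D : ℕ → ℕ)
    (A : ∀ k : ℕ, Fin d → Fin d → Matrix (Fin (D (k + 1))) (Fin (D k)) ℂ)
    (σ : Fin (d * d) → Matrix (Fin d) (Fin d) ℂ) (k : ℕ) (α : Fin (d * d)) :
    Matrix (Fin (D (k + 1)) × Fin (D (k + 1))) (Fin (D k) × Fin (D k)) ℂ :=
  (if (α : ℕ) = 0 then ((d : ℂ))⁻¹ else 1) • Smat (A k) (σ α)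

/-- The product `S_{α_N}^{(N)} ⋯ S_{α_1}^{(1)}`. -/
def Schain (d : ℕ) (D : ℕ → ℕ)
    (A : ∀ k : ℕ, Fin d → Fin d → Matrix (Fin (D (k + 1))) (Fin (D k)) ℂ)
    (σ : Fin (d * d) → Matrix (Fin d) (Fin d) ℂ) :
    ∀ N : ℕ, (Fin N → Fin (d * d)) →
      Matrix (Fin (D N) × Fin (D N)) (Fin (D 0) × Fin (D 0)) ℂ
  | 0, _ => 1
  | (N + 1), α =>
      Ssite d D A σ N (α (Fin.last N)) * Schain d D A σ N (fun t => α t.castSucc)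

/-- `ρ^{(N)} = E^{(N)} ⋯ E^{(1)}`. -/
def rhoChain (d : ℕ) (D : ℕ → ℕ)
    (A : ∀ k : ℕ, Fin d → Fin d → Matrix (Fin (D (k + 1))) (Fin (D k)) ℂ) :
    ∀ N : ℕ, Matrix (Fin (D N) × Fin (D N)) (Fin (D 0) × Fin (D 0)) ℂ
  | 0 => 1
  | (N + 1) => Esite d D A N * rhoChain d D A N

/-- `𝒮^{(N)}`: the real span of all products `S_{α_N}^{(N)} ⋯ S_{α_1}^{(1)}` with some
`α_t ≠ 0`. -/
def Sspan (d : ℕ) (D : ℕ → ℕ)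
    (A : ∀ k : ℕ, Fin d → Fin d → Matrix (Fin (D (k + 1))) (Fin (D k)) ℂ)
    (σ : Fin (d * d) → Matrix (Fin d) (Fin d) ℂ) (N : ℕ) :
    Submodule ℝ (Matrix (Fin (D N) × Fin (D N)) (Fin (D 0) × Fin (D 0)) ℂ) :=
  Submodule.span ℝ
    {M | ∃ α : Fin N → Fin (d * d), (∃ t, (α t : ℕ) ≠ 0) ∧ M = Schain d D A σ N α}

/-- Identification of a vector in `ℂ^D ⊗ ℂ^D` (here: a `D² × 1` matrix, the column index
ranging over the trivial type `Fin (D 0) × Fin (D 0)` with `D 0 = 1`) with a `D × D`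
matrix. -/
def matHat {Dk D0 : ℕ} (M : Matrix (Fin Dk × Fin Dk) (Fin D0 × Fin D0) ℂ) :
    Matrix (Fin Dk) (Fin Dk) ℂ :=
  Matrix.of fun m n => ∑ q, M (m, n) q

theorem sum_snoc_aux {N d : ℕ} {V : Type*} [AddCommMonoid V] (F : (Fin (N + 1) → Fin d) → V) :
    ∑ f, F f = ∑ a : Fin d, ∑ g : Fin N → Fin d, F (Fin.snoc (α := fun _ => Fin d) g a) := by
  rw [← Fintype.sum_prod_type']
  exact ((Fin.snocEquiv (fun _ : Fin (N + 1) => Fin d)).sum_comp F).symm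

/-- the rescaled basis -/
def tauAux (d : ℕ) (σ : Fin (d * d) → Matrix (Fin d) (Fin d) ℂ) (α : Fin (d * d)) :
    Matrix (Fin d) (Fin d) ℂ := (if (α : ℕ) = 0 then ((d : ℂ))⁻¹ else 1) • σ α

theorem Ssite_aux (d : ℕ) (D : ℕ → ℕ)
    (A : ∀ k : ℕ, Fin d → Fin d → Matrix (Fin (D (k + 1))) (Fin (D k)) ℂ)
    (σ : Fin (d * d) → Matrix (Fin d) (Fin d) ℂ) (k : ℕ) (α : Fin (d * d)) :
    Ssite d D A σ k α = Smat (A k) (tauAux d σ α) := by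
  simp only [Ssite, Smat, tauAux, Finset.smul_sum, smul_smul, Matrix.smul_apply, smul_eq_mul]

theorem mat_sum_mul_aux {l m n ι κ : Type*} [Fintype m] [Fintype ι] [Fintype κ]
    (f : ι → Matrix l m ℂ) (g : κ → Matrix m n ℂ) :
    (∑ i, f i) * (∑ k, g k) = ∑ i, ∑ k, f i * g k := by
  rw [Matrix.sum_mul]
  refine Finset.sum_congr rfl fun i _ => ?_
  rw [Matrix.mul_sum]

theorem Schain_aux (d : ℕ) (D : ℕ → ℕ)
    (A : ∀ k : ℕ, Fin d → Fin d → Matrix (Fin (D (k + 1))) (Fin (D k)) ℂ)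
    (σ : Fin (d * d) → Matrix (Fin d) (Fin d) ℂ) (N : ℕ) (α : Fin N → Fin (d * d)) :
    Schain d D A σ N α = ∑ i, ∑ j, ∑ j', (∏ t, tauAux d σ (α t) (j' t) (j t)) •
      (((mpoProd d D A N i j').map (starRingEnd ℂ)) ⊗ₖ (mpoProd d D A N i j)) := by
  induction N with
  | zero => simp [Schain, mpoProd]
  | succ N ih =>
    rw [Schain, ih, Ssite_aux, Smat, sum_snoc_aux, mat_sum_mul_aux]
    refine Finset.sum_congr rfl fun a _ => Finset.sum_congr rfl fun i _ => ?_
    rw [sum_snoc_aux, mat_sum_mul_aux]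
    refine Finset.sum_congr rfl fun b _ => Finset.sum_congr rfl fun j _ => ?_
    rw [sum_snoc_aux, mat_sum_mul_aux]
    refine Finset.sum_congr rfl fun c _ => Finset.sum_congr rfl fun j' _ => ?_
    rw [Fin.prod_univ_castSucc]
    simp only [mpoProd, Fin.snoc_castSucc, Fin.snoc_last, Matrix.map_mul,
      Matrix.mul_kronecker_mul, Matrix.smul_mul, Matrix.mul_smul, smul_smul]

theorem kron_sum_aux {a b c e : Type*} [Fintype a] [Fintype b] [Fintype c] [Fintype e]
    (M : Matrix a b ℂ) (P : Matrix c e ℂ) :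
    ∑ p, ∑ q, (M ⊗ₖ P) p q = (∑ m, ∑ n, M m n) * (∑ m, ∑ n, P m n) := by
  simp only [Fintype.sum_prod_type, Matrix.kroneckerMap_apply, Finset.sum_mul_sum]

/-- pairing of a product operator with X -/
def pairAux {N d : ℕ} (M : Fin N → Matrix (Fin d) (Fin d) ℂ)
    (X : Matrix (Fin N → Fin d) (Fin N → Fin d) ℂ) : ℂ :=
  ∑ j, ∑ j', (∏ t, M t (j' t) (j t)) * X j' j

theorem chain_pair_aux (d : ℕ) (D : ℕ → ℕ)
    (A : ∀ k : ℕ, Fin d → Fin d → Matrix (Fin (D (k + 1))) (Fin (D k)) ℂ)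
    (σ : Fin (d * d) → Matrix (Fin d) (Fin d) ℂ) (N : ℕ) (α : Fin N → Fin (d * d)) :
    ∑ p, ∑ q, Schain d D A σ N α p q =
      pairAux (fun t => tauAux d σ (α t)) (star (mpoOp d D A N) * mpoOp d D A N) := by
  have h : ∀ i j j', ∑ p, ∑ q, ((∏ t, tauAux d σ (α t) (j' t) (j t)) •
      (((mpoProd d D A N i j').map (starRingEnd ℂ)) ⊗ₖ (mpoProd d D A N i j))) p q =
      (∏ t, tauAux d σ (α t) (j' t) (j t)) *
        (star (mpoOp d D A N i j') * mpoOp d D A N i j) := by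
    intro i j j'
    simp only [Matrix.smul_apply, smul_eq_mul, ← Finset.mul_sum, kron_sum_aux]
    simp [mpoOp]
  have h2 : ∑ p, ∑ q, Schain d D A σ N α p q = ∑ i, ∑ j, ∑ j', 
      (∏ t, tauAux d σ (α t) (j' t) (j t)) *
        (star (mpoOp d D A N i j') * mpoOp d D A N i j) := by
    simp only [← h]
    let L : Matrix (Fin (D N) × Fin (D N)) (Fin (D 0) × Fin (D 0)) ℂ →+ ℂ :=
      { toFun := fun M => ∑ p, ∑ q, M p q
        map_zero' := by simp
        map_add' := by intro x y; simp [Finset.sum_add_distrib] }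
    change L _ = ∑ i, ∑ j, ∑ j', L _
    rw [Schain_aux]
    simp only [map_sum]
  rw [h2, pairAux, Finset.sum_comm]
  refine Finset.sum_congr rfl fun j _ => ?_
  rw [Finset.sum_comm]
  refine Finset.sum_congr rfl fun j' _ => ?_
  rw [← Finset.mul_sum, Matrix.mul_apply]
  simp [Matrix.star_apply]

theorem pair_one_aux {N d : ℕ} (M : Fin N → Matrix (Fin d) (Fin d) ℂ) :
    pairAux M 1 = ∏ t, (M t).trace := by
  simp [pairAux, Matrix.one_apply, Matrix.trace, Finset.prod_univ_sum]

theorem pair_single_aux {N d : ℕ} (a b : Fin N → Fin d)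
    (X : Matrix (Fin N → Fin d) (Fin N → Fin d) ℂ) :
    pairAux (fun t => Matrix.single (a t) (b t) (1 : ℂ)) X = X a b := by
  have h : ∀ j j' : Fin N → Fin d,
      (∏ t, Matrix.single (a t) (b t) (1 : ℂ) (j' t) (j t)) =
        if b = j then (if a = j' then 1 else 0) else 0 := by
    intro j j'
    simp only [Matrix.single_apply]
    rw [Finset.prod_ite_zero]
    simp only [Finset.mem_univ, true_imp_iff, Finset.prod_const_one, funext_iff]
    by_cases h1 : ∀ t, b t = j t
    · by_cases h2 : ∀ t, a t = j' t
      · rw [if_pos (fun t => ⟨h2 t, h1 t⟩), if_pos h1, if_pos h2]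
      · rw [if_neg (fun h => h2 fun t => (h t).1), if_pos h1, if_neg h2]
    · rw [if_neg (fun h => h1 fun t => (h t).2), if_neg h1]
  simp [pairAux, h]

theorem pair_sum_aux {N d : ℕ} {ι : Type*} [Fintype ι] [DecidableEq ι]
    (c : Fin N → ι → ℂ) (τ : ι → Matrix (Fin d) (Fin d) ℂ)
    (X : Matrix (Fin N → Fin d) (Fin N → Fin d) ℂ) :
    pairAux (fun t => ∑ α, c t α • τ α) X =
      ∑ α : Fin N → ι, (∏ t, c t (α t)) * pairAux (fun t => τ (α t)) X := by
  simp only [pairAux, Matrix.sum_apply, Matrix.smul_apply, smul_eq_mul, Finset.prod_univ_sum,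
    Fintype.piFinset_univ, Finset.prod_mul_distrib, Finset.mul_sum, Finset.sum_mul]
  conv_rhs => rw [Finset.sum_comm]
  refine Finset.sum_congr rfl fun j _ => ?_
  conv_rhs => rw [Finset.sum_comm]
  refine Finset.sum_congr rfl fun j' _ => ?_
  simp only [mul_assoc]

/-- A tensor sequence `A_1, …, A_N` generates a matrix-product unitary
if and only if every product `S_{α_N}^{(N)} ⋯ S_{α_1}^{(1)}` (a `1 × 1` matrix, identified
with a scalar by summing its entries) equals `1` when all `α_k = 0` and `0` otherwise. -/
theorem stmt_0 (N d : ℕ) (hN : 1 ≤ N) (hd : 2 ≤ d) (D : ℕ → ℕ)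
    (hD0 : D 0 = 1) (hDN : D N = 1) (hDpos : ∀ k, k ≤ N → 1 ≤ D k)
    (A : ∀ k : ℕ, Fin d → Fin d → Matrix (Fin (D (k + 1))) (Fin (D k)) ℂ)
    (σ : Fin (d * d) → Matrix (Fin d) (Fin d) ℂ)
    (hσ0 : ∀ α : Fin (d * d), (α : ℕ) = 0 → σ α = 1)
    (hσherm : ∀ α : Fin (d * d), (α : ℕ) ≠ 0 → (σ α).IsHermitian)
    (hσtr : ∀ α : Fin (d * d), (α : ℕ) ≠ 0 → (σ α).trace = 0)
    (hσorth : ∀ α β : Fin (d * d), (α : ℕ) ≠ 0 → (β : ℕ) ≠ 0 →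
      (σ α * σ β).trace = if α = β then 1 else 0)
    (hσbasis : Submodule.span ℂ (Set.range σ) = ⊤) :
    mpoOp d D A N ∈ Matrix.unitaryGroup (Fin N → Fin d) ℂ ↔
      ∀ α : Fin N → Fin (d * d),
        (∑ p, ∑ q, Schain d D A σ N α p q) =
          (if ∀ t, (α t : ℕ) = 0 then 1 else 0) := by
  have hd0 : (d : ℂ) ≠ 0 := by
    have : d ≠ 0 := by omega
    exact_mod_cast this
  have htr : ∀ α, (tauAux d σ α).trace = if (α : ℕ) = 0 then 1 else 0 := by
    intro α
    by_cases h : (α : ℕ) = 0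
    · simp [tauAux, h, hσ0 α h, hd0]
    · simp [tauAux, h, hσtr α h]
  have hone : ∀ α : Fin N → Fin (d * d), pairAux (fun t => tauAux d σ (α t)) 1 =
      (if ∀ t, (α t : ℕ) = 0 then 1 else 0) := by
    intro α
    rw [pair_one_aux]
    simp only [htr]
    rw [Finset.prod_ite_zero]
    simp
  rw [Matrix.mem_unitaryGroup_iff']
  simp only [chain_pair_aux, ← hone]
  constructor
  · intro h α
    rw [h]
  · intro h
    have hc : ∀ M : Matrix (Fin d) (Fin d) ℂ, ∃ c : Fin (d * d) → ℂ,
        M = ∑ α, c α • tauAux d σ α := by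
      intro M
      have hM : M ∈ Submodule.span ℂ (Set.range σ) := by rw [hσbasis]; trivial
      obtain ⟨c, hc⟩ := (Submodule.mem_span_range_iff_exists_fun ℂ).1 hM
      refine ⟨fun α => c α * (if (α : ℕ) = 0 then (d : ℂ) else 1), ?_⟩
      rw [← hc]
      refine Finset.sum_congr rfl fun α _ => ?_
      rw [tauAux, smul_smul]
      beta_reduce
      by_cases h0 : (α : ℕ) = 0
      · rw [if_pos h0, if_pos h0, mul_assoc, mul_inv_cancel₀ hd0, mul_one]
      · rw [if_neg h0, if_neg h0, mul_one, mul_one]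
    choose c hc using hc
    ext a b
    rw [← pair_single_aux a b (star (mpoOp d D A N) * mpoOp d D A N), ← pair_single_aux a b (1 : Matrix _ _ ℂ)]
    have he : (fun t => Matrix.single (a t) (b t) (1 : ℂ)) =
        fun t => ∑ α, c (Matrix.single (a t) (b t) (1 : ℂ)) α • tauAux d σ α :=
      funext fun t => hc _
    rw [he, pair_sum_aux (fun t => c (Matrix.single (a t) (b t) (1 : ℂ))),
      pair_sum_aux (fun t => c (Matrix.single (a t) (b t) (1 : ℂ)))]
    simp only [h]

end
end

section
/- A tensor sequence A_1, …, A_N generates a matrix-product unitary if and only if ρ^{(N)} = 1 (as a scalar, since D_N = 1) and 𝒮^{(N)} = {0}. -/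
open Matrix Kronecker

noncomputable section

/-- chain with general one-site matrices -/
def Tchain (d : ℕ) (D : ℕ → ℕ)
    (A : ∀ k : ℕ, Fin d → Fin d → Matrix (Fin (D (k + 1))) (Fin (D k)) ℂ) :
    ∀ N : ℕ, (Fin N → Matrix (Fin d) (Fin d) ℂ) →
      Matrix (Fin (D N) × Fin (D N)) (Fin (D 0) × Fin (D 0)) ℂ
  | 0, _ => 1
  | (N + 1), M =>
      Smat (A N) (M (Fin.last N)) * Tchain d D A N (fun t => M t.castSucc)

theorem sum_snoc {d N : ℕ} {X : Type*} [AddCommMonoid X] (f : (Fin (N+1) → Fin d) → X) :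
    ∑ i, f i = ∑ a : Fin d, ∑ i : Fin N → Fin d, f (Fin.snoc (α := fun _ => Fin d) i a) := by
  rw [← Equiv.sum_comp (Fin.snocEquiv (fun _ => Fin d)) f, Fintype.sum_prod_type]
  rfl

theorem Tchain_eq (d : ℕ) (D : ℕ → ℕ)
    (A : ∀ k : ℕ, Fin d → Fin d → Matrix (Fin (D (k + 1))) (Fin (D k)) ℂ) (N : ℕ)
    (M : Fin N → Matrix (Fin d) (Fin d) ℂ) :
    Tchain d D A N M = ∑ i : Fin N → Fin d, ∑ j : Fin N → Fin d, ∑ j' : Fin N → Fin d,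
      (∏ t, M t (j' t) (j t)) •
        (((mpoProd d D A N i j').map (starRingEnd ℂ)) ⊗ₖ (mpoProd d D A N i j)) := by
  induction N with
  | zero => simp [Tchain, mpoProd]
  | succ N ih =>
    rw [Tchain, ih, sum_snoc]
    simp only [sum_snoc, Smat, Matrix.sum_mul]
    refine Finset.sum_congr rfl fun a _ => ?_
    conv_rhs => rw [Finset.sum_comm]
    refine Finset.sum_congr rfl fun b _ => ?_
    simp only [Matrix.mul_sum]
    conv_lhs => rw [Finset.sum_comm]
    refine Finset.sum_congr rfl fun i _ => ?_
    conv_lhs => rw [Finset.sum_comm]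
    refine Finset.sum_congr rfl fun j _ => ?_
    refine Finset.sum_congr rfl fun c _ => ?_
    refine Finset.sum_congr rfl fun j' _ => ?_
    rw [Matrix.smul_mul, Matrix.mul_smul, smul_smul, ← Matrix.mul_kronecker_mul,
      Fin.prod_univ_castSucc]
    simp only [mpoProd, Fin.snoc_last, Fin.snoc_castSucc, Matrix.map_mul]
    rw [mul_comm]

theorem Schain_eq (d : ℕ) (D : ℕ → ℕ)
    (A : ∀ k : ℕ, Fin d → Fin d → Matrix (Fin (D (k + 1))) (Fin (D k)) ℂ)
    (σ : Fin (d * d) → Matrix (Fin d) (Fin d) ℂ) (N : ℕ) (α : Fin N → Fin (d * d)) :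
    Schain d D A σ N α = (∏ t, (if (α t : ℕ) = 0 then ((d : ℂ))⁻¹ else 1)) •
      Tchain d D A N (fun t => σ (α t)) := by
  induction N with
  | zero => simp [Schain, Tchain]
  | succ N ih =>
    rw [Schain, Tchain, ih, Ssite, Matrix.smul_mul, Matrix.mul_smul, smul_smul,
      Fin.prod_univ_castSucc, mul_comm]

theorem rhoChain_eq (d : ℕ) (D : ℕ → ℕ)
    (A : ∀ k : ℕ, Fin d → Fin d → Matrix (Fin (D (k + 1))) (Fin (D k)) ℂ) (N : ℕ) :
    rhoChain d D A N = ((d : ℂ)⁻¹ ^ N) • Tchain d D A N (fun _ => 1) := by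
  induction N with
  | zero => simp [rhoChain, Tchain]
  | succ N ih =>
    rw [rhoChain, Tchain, ih, Esite, Matrix.smul_mul, Matrix.mul_smul, smul_smul, pow_succ,
      mul_comm]

/-- The multilinear functional associated with a matrix on the full space. -/
def Lfun (d N : ℕ) (W : Matrix (Fin N → Fin d) (Fin N → Fin d) ℂ) :
    MultilinearMap ℂ (fun _ : Fin N => Matrix (Fin d) (Fin d) ℂ) ℂ :=
  ∑ j' : Fin N → Fin d, ∑ j : Fin N → Fin d, W j' j •
    (MultilinearMap.mkPiAlgebra ℂ (Fin N) ℂ).compLinearMap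
      (fun t => Matrix.entryLinearMap ℂ ℂ (j' t) (j t))

theorem Lfun_apply (d N : ℕ) (W : Matrix (Fin N → Fin d) (Fin N → Fin d) ℂ)
    (M : Fin N → Matrix (Fin d) (Fin d) ℂ) :
    Lfun d N W M = ∑ j', ∑ j, W j' j * ∏ t, M t (j' t) (j t) := by
  simp [Lfun]

theorem Lfun_one (d N : ℕ) (M : Fin N → Matrix (Fin d) (Fin d) ℂ) :
    Lfun d N 1 M = ∏ t, (M t).trace := by
  rw [Lfun_apply]
  simp only [Matrix.one_apply, ite_mul, one_mul, zero_mul, Finset.sum_ite_eq, Finset.mem_univ,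
    if_true, Matrix.trace, Matrix.diag_apply]
  rw [Finset.prod_univ_sum, Fintype.piFinset_univ]

theorem Lfun_single (d N : ℕ) (W : Matrix (Fin N → Fin d) (Fin N → Fin d) ℂ)
    (a b : Fin N → Fin d) :
    Lfun d N W (fun t => Matrix.single (a t) (b t) 1) = W a b := by
  rw [Lfun_apply, Finset.sum_eq_single a, Finset.sum_eq_single b]
  · simp
  · intro j _ hj
    obtain ⟨t, ht⟩ := Function.ne_iff.mp hj
    rw [Finset.prod_eq_zero (Finset.mem_univ t), mul_zero]
    simp [ht.symm]
  · simp
  · intro j' _ hj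
    obtain ⟨t, ht⟩ := Function.ne_iff.mp hj
    refine Finset.sum_eq_zero fun j _ => ?_
    rw [Finset.prod_eq_zero (Finset.mem_univ t), mul_zero]
    simp [ht.symm]
  · simp

theorem sum_Tchain (d : ℕ) (D : ℕ → ℕ)
    (A : ∀ k : ℕ, Fin d → Fin d → Matrix (Fin (D (k + 1))) (Fin (D k)) ℂ) (N : ℕ)
    (M : Fin N → Matrix (Fin d) (Fin d) ℂ) :
    ∑ p, ∑ q, Tchain d D A N M p q =
      Lfun d N (star (mpoOp d D A N) * mpoOp d D A N) M := by
  have key : ∀ i j j', ∑ p, ∑ q, (((mpoProd d D A N i j').map (starRingEnd ℂ)) ⊗ₖ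
      (mpoProd d D A N i j)) p q =
      (starRingEnd ℂ) (mpoOp d D A N i j') * mpoOp d D A N i j := by
    intro i j j'
    simp only [mpoOp, Matrix.of_apply, map_sum, Fintype.sum_prod_type, Matrix.kronecker_apply,
      Matrix.map_apply, Finset.sum_mul_sum]
  have h2 : ∑ p, ∑ q, Tchain d D A N M p q = ∑ i, ∑ j, ∑ j', (∏ t, M t (j' t) (j t)) *
      ((starRingEnd ℂ) (mpoOp d D A N i j') * mpoOp d D A N i j) := by
    simp only [← key, Finset.mul_sum]
    rw [Tchain_eq]
    simp only [Matrix.sum_apply, Matrix.smul_apply, smul_eq_mul]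
    simp only [← Fintype.sum_prod_type']
    simp only [Fintype.sum_prod_type]
    let s : (Fin (D N) × Fin (D N)) × (Fin (D 0) × Fin (D 0)) → (Fin N → Fin d) × (Fin N → Fin d) × (Fin N → Fin d) → ℂ :=
      fun x y => (∏ t, M t (y.2.2 t) (y.2.1 t)) * (((mpoProd d D A N y.1 y.2.2).map (starRingEnd ℂ)) ⊗ₖ
      (mpoProd d D A N y.1 y.2.1)) x.1 x.2
    have := Finset.sum_comm (s := Finset.univ) (t := Finset.univ) (f := s)
    simpa only [Fintype.sum_prod_type, s] using this
  rw [h2, Lfun_apply]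
  simp only [Matrix.mul_apply, Matrix.star_apply, Finset.sum_mul]
  have e : ∀ f : (Fin N → Fin d) → (Fin N → Fin d) → (Fin N → Fin d) → ℂ,
      ∑ i, ∑ j, ∑ j', f i j j' = ∑ j', ∑ j, ∑ i, f i j j' := by
    intro f
    rw [Finset.sum_comm, Finset.sum_congr rfl fun j _ => Finset.sum_comm]
    exact Finset.sum_comm
  rw [e]
  refine Finset.sum_congr rfl fun j' _ => ?_
  refine Finset.sum_congr rfl fun j _ => ?_
  refine Finset.sum_congr rfl fun i _ => ?_
  rw [mul_comm]
  rfl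

/-- A tensor sequence generates a matrix-product unitary iff
`ρ^{(N)} = 1` (as a scalar, `D N = 1`) and `𝒮^{(N)} = {0}`. -/
theorem stmt_1 (N d : ℕ) (hN : 1 ≤ N) (hd : 2 ≤ d) (D : ℕ → ℕ)
    (hD0 : D 0 = 1) (hDN : D N = 1) (hDpos : ∀ k, k ≤ N → 1 ≤ D k)
    (A : ∀ k : ℕ, Fin d → Fin d → Matrix (Fin (D (k + 1))) (Fin (D k)) ℂ)
    (σ : Fin (d * d) → Matrix (Fin d) (Fin d) ℂ)
    (hσ0 : ∀ α : Fin (d * d), (α : ℕ) = 0 → σ α = 1)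
    (hσherm : ∀ α : Fin (d * d), (α : ℕ) ≠ 0 → (σ α).IsHermitian)
    (hσtr : ∀ α : Fin (d * d), (α : ℕ) ≠ 0 → (σ α).trace = 0)
    (hσorth : ∀ α β : Fin (d * d), (α : ℕ) ≠ 0 → (β : ℕ) ≠ 0 →
      (σ α * σ β).trace = if α = β then 1 else 0)
    (hσbasis : Submodule.span ℂ (Set.range σ) = ⊤) :
    mpoOp d D A N ∈ Matrix.unitaryGroup (Fin N → Fin d) ℂ ↔
      ((∑ p, ∑ q, rhoChain d D A N p q) = 1 ∧ Sspan d D A σ N = ⊥) := by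
  have hd0 : (d : ℂ) ≠ 0 := by
    have : d ≠ 0 := by omega
    exact_mod_cast this
  have hchain : ∀ α : Fin N → Fin (d * d), ∀ p q, ∀ p' q',
      Schain d D A σ N α p q = Schain d D A σ N α p' q' := by
    intro α p q p' q'
    have h1 : Subsingleton (Fin (D N)) := by rw [hDN]; infer_instance
    have h2 : Subsingleton (Fin (D 0)) := by rw [hD0]; infer_instance
    rw [Subsingleton.elim p p', Subsingleton.elim q q']
  have hne : Nonempty (Fin (D N)) := by rw [hDN]; infer_instance
  have hne0 : Nonempty (Fin (D 0)) := by rw [hD0]; infer_instance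
  have hcard : Fintype.card (Fin (D N)) = 1 := by simp [hDN]
  have hcard0 : Fintype.card (Fin (D 0)) = 1 := by simp [hD0]
  have hspan : Sspan d D A σ N = ⊥ ↔ ∀ α : Fin N → Fin (d * d), (∃ t, (α t : ℕ) ≠ 0) →
      Lfun d N (star (mpoOp d D A N) * mpoOp d D A N) (fun t => σ (α t)) = 0 := by
    rw [Sspan, Submodule.span_eq_bot]
    have hz : ∀ α : Fin N → Fin (d * d), Schain d D A σ N α = 0 ↔
        Lfun d N (star (mpoOp d D A N) * mpoOp d D A N) (fun t => σ (α t)) = 0 := by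
      intro α
      have hc : (∏ t, (if (α t : ℕ) = 0 then ((d : ℂ))⁻¹ else 1)) ≠ 0 := by
        refine Finset.prod_ne_zero_iff.mpr fun t _ => ?_
        split_ifs
        · exact inv_ne_zero hd0
        · exact one_ne_zero
      have hsum : ∑ p, ∑ q, Schain d D A σ N α p q =
          (∏ t, (if (α t : ℕ) = 0 then ((d : ℂ))⁻¹ else 1)) *
          Lfun d N (star (mpoOp d D A N) * mpoOp d D A N) (fun t => σ (α t)) := by
        rw [← sum_Tchain, Schain_eq]
        simp only [Matrix.smul_apply, smul_eq_mul, Finset.mul_sum]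
      constructor
      · intro h
        rw [h] at hsum
        simp only [Matrix.zero_apply, Finset.sum_const_zero] at hsum
        exact (mul_eq_zero.mp hsum.symm).resolve_left hc
      · intro h
        rw [h, mul_zero] at hsum
        ext p q
        rw [Finset.sum_congr rfl fun p' _ => Finset.sum_congr rfl
          fun q' _ => hchain α p' q' p q] at hsum
        simpa [hcard, hcard0, hDN, hD0] using hsum
    constructor
    · intro h α hα
      exact (hz α).mp (h _ ⟨α, hα, rfl⟩)
    · rintro h _ ⟨α, hα, rfl⟩
      exact (hz α).mpr (h α hα)
  have hrho : (∑ p, ∑ q, rhoChain d D A N p q) = 1 ↔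
      Lfun d N (star (mpoOp d D A N) * mpoOp d D A N) (fun _ => 1) = (d : ℂ) ^ N := by
    rw [← sum_Tchain, rhoChain_eq]
    simp only [Matrix.smul_apply, smul_eq_mul, ← Finset.mul_sum]
    rw [inv_pow, inv_mul_eq_one₀ (pow_ne_zero _ hd0), eq_comm]
  rw [hspan, hrho, Matrix.mem_unitaryGroup_iff']
  constructor
  · intro h
    rw [h]
    refine ⟨by simp [Lfun_one], ?_⟩
    rintro α ⟨t, ht⟩
    rw [Lfun_one]
    exact Finset.prod_eq_zero (Finset.mem_univ t) (hσtr _ ht)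
  · rintro ⟨h1, h2⟩
    have hfr : Fintype.card (Fin (d * d)) = Module.finrank ℂ (Matrix (Fin d) (Fin d) ℂ) := by
      simp [Module.finrank_matrix]
    let b := basisOfTopLeSpanOfCardEqFinrank σ hσbasis.ge hfr
    have hb : ∀ α, b α = σ α := fun α => by simp [b]
    have hL : Lfun d N (star (mpoOp d D A N) * mpoOp d D A N) = Lfun d N 1 := by
      refine Module.Basis.ext_multilinear (fun _ => b) fun α => ?_
      simp only [hb]
      rw [Lfun_one]
      by_cases hα : ∃ t, (α t : ℕ) ≠ 0
      · rw [h2 α hα]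
        obtain ⟨t, ht⟩ := hα
        exact (Finset.prod_eq_zero (Finset.mem_univ t) (hσtr _ ht)).symm
      · push Not at hα
        simp only [fun t => hσ0 _ (hα t)]
        rw [h1]
        simp
    ext a c
    have := Lfun_single d N (star (mpoOp d D A N) * mpoOp d D A N) a c
    rw [hL, Lfun_single] at this
    exact this.symm

end
end

section
/- If a tensor sequence A_1, …, A_N generates a matrix-product unitary and is in canonical form, then for every k = 1, …, N: the matrix ρ̂^{(k)} is positive semidefinite with trace 1 (i.e., a normalized quantum state), and for every X ∈ 𝒮^{(k)} the matrix X̂ is Hermitian with trace 0. -/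
open Matrix Kronecker
open scoped ComplexOrder

noncomputable section

/-- Weighted basis matrix absorbing the scalar of `Ssite`. -/
def tauMat (d : ℕ) (σ : Fin (d * d) → Matrix (Fin d) (Fin d) ℂ) (α : Fin (d * d)) :
    Matrix (Fin d) (Fin d) ℂ :=
  (if (α : ℕ) = 0 then ((d : ℂ))⁻¹ else 1) • σ α

theorem Smat_smul {d Dl Dr : ℕ} (A : Fin d → Fin d → Matrix (Fin Dl) (Fin Dr) ℂ)
    (c : ℂ) (M : Matrix (Fin d) (Fin d) ℂ) : Smat A (c • M) = c • Smat A M := by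
  simp only [Smat, Finset.smul_sum, smul_smul, Matrix.smul_apply, smul_eq_mul]

theorem Ssite_eq (d : ℕ) (D : ℕ → ℕ)
    (A : ∀ k : ℕ, Fin d → Fin d → Matrix (Fin (D (k + 1))) (Fin (D k)) ℂ)
    (σ : Fin (d * d) → Matrix (Fin d) (Fin d) ℂ) (k : ℕ) (α : Fin (d * d)) :
    Ssite d D A σ k α = Smat (A k) (tauMat d σ α) := by
  rw [tauMat, Smat_smul, Ssite]

theorem Esite_eq (d : ℕ) (D : ℕ → ℕ)
    (A : ∀ k : ℕ, Fin d → Fin d → Matrix (Fin (D (k + 1))) (Fin (D k)) ℂ) (k : ℕ) :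
    Esite d D A k = Smat (A k) ((d : ℂ)⁻¹ • 1) := by
  rw [Smat_smul, Esite]

theorem matHat_Smat {d Dl Dr D0 : ℕ} (A : Fin d → Fin d → Matrix (Fin Dl) (Fin Dr) ℂ)
    (M : Matrix (Fin d) (Fin d) ℂ) (X : Matrix (Fin Dr × Fin Dr) (Fin D0 × Fin D0) ℂ) :
    matHat (Smat A M * X) =
      ∑ i, ∑ j, ∑ j', M j' j • ((A i j').map (starRingEnd ℂ) * matHat X * (A i j)ᵀ) := by
  have hlin : ∀ (B C : Matrix (Fin Dl) (Fin Dr) ℂ) (m n : Fin Dl),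
      ∑ q, ((B ⊗ₖ C) * X) (m, n) q = (B * matHat X * Cᵀ) m n := by
    intro B C m n
    simp only [Matrix.mul_apply, Matrix.kroneckerMap_apply, matHat, Matrix.of_apply,
      Matrix.transpose_apply]
    rw [Finset.sum_comm]
    simp only [← Finset.mul_sum]
    rw [Fintype.sum_prod_type_right]
    refine Finset.sum_congr rfl fun y _ => ?_
    rw [Finset.sum_mul]
    refine Finset.sum_congr rfl fun x _ => ?_
    ring
  ext m n
  simp only [matHat, Matrix.of_apply] at hlin ⊢
  simp only [Smat, Matrix.sum_mul, Matrix.sum_apply, Matrix.smul_mul,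
    Matrix.smul_apply]
  rw [Finset.sum_comm]; refine Finset.sum_congr rfl fun i _ => ?_
  rw [Finset.sum_comm]; refine Finset.sum_congr rfl fun j _ => ?_
  rw [Finset.sum_comm]; refine Finset.sum_congr rfl fun j' _ => ?_
  rw [← Finset.smul_sum]
  exact congrArg _ (hlin _ _ m n)

theorem trace_Smat_one {d Dl Dr D0 : ℕ} (A : Fin d → Fin d → Matrix (Fin Dl) (Fin Dr) ℂ)
    (hcan : ((d : ℂ))⁻¹ • ∑ i, ∑ j, (A i j)ᴴ * (A i j) = 1)
    (X : Matrix (Fin Dr × Fin Dr) (Fin D0 × Fin D0) ℂ) :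
    (matHat (Smat A ((d : ℂ)⁻¹ • 1) * X)).trace = (matHat X).trace := by
  rw [matHat_Smat]
  have h1 : ∀ i j, ((A i j).map (starRingEnd ℂ) * matHat X * (A i j)ᵀ).trace
      = (((A i j)ᴴ * A i j)ᵀ * matHat X).trace := by
    intro i j
    rw [Matrix.trace_mul_comm, ← Matrix.mul_assoc, Matrix.transpose_mul]
    rfl
  have h2 := congrArg (fun Z => (Zᵀ * matHat X).trace) hcan
  simp only [Matrix.transpose_one, Matrix.one_mul, Matrix.transpose_smul, Matrix.transpose_sum,
    Matrix.smul_mul, Matrix.sum_mul, Matrix.trace_smul, Matrix.trace_sum] at h2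
  rw [← h2]
  simp only [Matrix.trace_sum, Matrix.trace_smul, h1, Matrix.smul_apply, Matrix.one_apply,
    smul_eq_mul, mul_ite, mul_one, mul_zero, ite_mul, zero_mul, Finset.sum_ite_eq',
    Finset.mem_univ, if_true, Finset.mul_sum]

theorem herm_Smat {d Dl Dr D0 : ℕ} (A : Fin d → Fin d → Matrix (Fin Dl) (Fin Dr) ℂ)
    (M : Matrix (Fin d) (Fin d) ℂ) (hM : M.IsHermitian)
    (X : Matrix (Fin Dr × Fin Dr) (Fin D0 × Fin D0) ℂ) (hX : (matHat X).IsHermitian) :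
    (matHat (Smat A M * X)).IsHermitian := by
  rw [matHat_Smat, Matrix.IsHermitian]
  simp only [Matrix.conjTranspose_sum, Matrix.conjTranspose_smul, Matrix.conjTranspose_mul]
  refine Finset.sum_congr rfl fun i _ => ?_
  rw [Finset.sum_comm]
  refine Finset.sum_congr rfl fun j _ => Finset.sum_congr rfl fun j' _ => ?_
  rw [hX.eq, hM.apply, ← Matrix.mul_assoc]
  congr 2
  ext a b
  simp

theorem psd_Smat {d Dl Dr D0 : ℕ} (A : Fin d → Fin d → Matrix (Fin Dl) (Fin Dr) ℂ)
    (X : Matrix (Fin Dr × Fin Dr) (Fin D0 × Fin D0) ℂ) (hX : (matHat X).PosSemidef) :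
    (matHat (Smat A ((d : ℂ)⁻¹ • 1) * X)).PosSemidef := by
  rw [matHat_Smat]
  refine Matrix.posSemidef_sum _ fun i _ => Matrix.posSemidef_sum _ fun j _ =>
    Matrix.posSemidef_sum _ fun j' _ => ?_
  by_cases h : j' = j
  · subst h
    have h3 := hX.mul_mul_conjTranspose_same ((A i j').map (starRingEnd ℂ))
    have h4 : ((A i j').map (starRingEnd ℂ))ᴴ = (A i j')ᵀ := by ext a b; simp
    rw [h4] at h3
    refine h3.smul ?_
    simp
  · simp [h, Matrix.PosSemidef.zero]

theorem matHat_one {n : ℕ} (h : n = 1) :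
    matHat (1 : Matrix (Fin n × Fin n) (Fin n × Fin n) ℂ) = 1 := by
  subst h
  ext a b
  fin_cases a; fin_cases b
  simp [matHat, Fintype.sum_prod_type]

theorem Schain_expand (d : ℕ) (D : ℕ → ℕ)
    (A : ∀ k : ℕ, Fin d → Fin d → Matrix (Fin (D (k + 1))) (Fin (D k)) ℂ)
    (σ : Fin (d * d) → Matrix (Fin d) (Fin d) ℂ) :
    ∀ (N : ℕ) (α : Fin N → Fin (d * d)), Schain d D A σ N α =
      ∑ p : Fin N → Fin d × Fin d × Fin d,
        (∏ t, tauMat d σ (α t) (p t).2.2 (p t).2.1) •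
          ((mpoProd d D A N (fun t => (p t).1) (fun t => (p t).2.2)).map (starRingEnd ℂ) ⊗ₖ
            mpoProd d D A N (fun t => (p t).1) (fun t => (p t).2.1))
  | 0, α => by
      simp [Schain, mpoProd]
  | (N + 1), α => by
      rw [Schain, Schain_expand d D A σ N, Ssite_eq,
        ← (Fin.snocEquiv (fun _ => Fin d × Fin d × Fin d)).sum_comp, Fintype.sum_prod_type]
      have : ∀ M, Smat (A N) M = ∑ x : Fin d × Fin d × Fin d, M x.2.2 x.2.1 •
          (((A N x.1 x.2.2).map (starRingEnd ℂ)) ⊗ₖ (A N x.1 x.2.1)) := by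
        intro M
        simp only [Fintype.sum_prod_type, Smat]
      rw [this, Matrix.sum_mul]
      refine Finset.sum_congr rfl fun x _ => ?_
      rw [Matrix.mul_sum]
      refine Finset.sum_congr rfl fun p _ => ?_
      simp only [Fin.snocEquiv_apply, Fin.prod_univ_castSucc, Fin.snoc_castSucc, Fin.snoc_last,
        mpoProd, Matrix.map_mul, Matrix.mul_kronecker_mul, Matrix.smul_mul, Matrix.mul_smul,
        smul_smul]

theorem trace_Schain_top (d : ℕ) (D : ℕ → ℕ)
    (A : ∀ k : ℕ, Fin d → Fin d → Matrix (Fin (D (k + 1))) (Fin (D k)) ℂ)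
    (σ : Fin (d * d) → Matrix (Fin d) (Fin d) ℂ) (N : ℕ) (hD0 : D 0 = 1) (hDN : D N = 1)
    (hU : mpoOp d D A N ∈ Matrix.unitaryGroup (Fin N → Fin d) ℂ)
    (α : Fin N → Fin (d * d)) :
    (matHat (Schain d D A σ N α)).trace = ∏ t, (tauMat d σ (α t)).trace := by
  have hone : ∀ {a b : ℕ} (ha : a = 1) (hb : b = 1) (P Q : Matrix (Fin a) (Fin b) ℂ),
      ∑ m, ∑ q : Fin b × Fin b, (P.map (starRingEnd ℂ) ⊗ₖ Q) (m, m) q =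
        star (∑ m, ∑ n, P m n) * ∑ m, ∑ n, Q m n := by
    intro a b ha hb P Q
    subst ha hb
    simp [Fintype.sum_prod_type]
  have h1 : (matHat (Schain d D A σ N α)).trace =
      ∑ p : Fin N → Fin d × Fin d × Fin d,
        (∏ t, tauMat d σ (α t) (p t).2.2 (p t).2.1) *
          (star (mpoOp d D A N (fun t => (p t).1) (fun t => (p t).2.2)) *
            mpoOp d D A N (fun t => (p t).1) (fun t => (p t).2.1)) := by
    simp only [mpoOp, Matrix.of_apply, ← hone hDN hD0]
    rw [Schain_expand]
    simp only [Matrix.trace, Matrix.diag_apply, matHat, Matrix.of_apply, Matrix.sum_apply,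
      Matrix.smul_apply, smul_eq_mul, Finset.mul_sum]
    refine (Finset.sum_congr rfl fun m _ => Finset.sum_comm).trans ?_
    rw [Finset.sum_comm]
  have hU' : ∀ j' j, ∑ i, star (mpoOp d D A N i j') * mpoOp d D A N i j =
      if j' = j then 1 else 0 := by
    intro j' j
    have := congrFun (congrFun (Matrix.mem_unitaryGroup_iff'.1 hU) j') j
    simpa [Matrix.mul_apply, Matrix.star_apply, Matrix.one_apply] using this
  rw [h1, ← (Equiv.arrowProdEquivProdArrow (Fin N) (fun _ => Fin d)
    (fun _ => Fin d × Fin d)).symm.sum_comp, Fintype.sum_prod_type, Finset.sum_comm,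
    ← (Equiv.arrowProdEquivProdArrow (Fin N) (fun _ => Fin d)
    (fun _ => Fin d)).symm.sum_comp, Fintype.sum_prod_type]
  simp only [Equiv.arrowProdEquivProdArrow, Equiv.coe_fn_symm_mk, ← Finset.mul_sum, hU',
    mul_ite, mul_one, mul_zero, Finset.sum_ite_eq', Finset.mem_univ, if_true]
  simp only [Matrix.trace, Matrix.diag_apply, Finset.prod_univ_sum, Fintype.piFinset_univ]

/-- If a tensor sequence generates a matrix-product unitary and is in
canonical form, then for every `k = 1, …, N` the matrix `ρ̂^{(k)}` is a normalized
quantum state (positive semidefinite with trace 1) and every `X ∈ 𝒮^{(k)}` gives a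
Hermitian traceless matrix `X̂`. -/
theorem stmt_3 (N d : ℕ) (hN : 1 ≤ N) (hd : 2 ≤ d) (D : ℕ → ℕ)
    (hD0 : D 0 = 1) (hDN : D N = 1) (hDpos : ∀ k, k ≤ N → 1 ≤ D k)
    (A : ∀ k : ℕ, Fin d → Fin d → Matrix (Fin (D (k + 1))) (Fin (D k)) ℂ)
    (σ : Fin (d * d) → Matrix (Fin d) (Fin d) ℂ)
    (hσ0 : ∀ α : Fin (d * d), (α : ℕ) = 0 → σ α = 1)
    (hσherm : ∀ α : Fin (d * d), (α : ℕ) ≠ 0 → (σ α).IsHermitian)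
    (hσtr : ∀ α : Fin (d * d), (α : ℕ) ≠ 0 → (σ α).trace = 0)
    (hσorth : ∀ α β : Fin (d * d), (α : ℕ) ≠ 0 → (β : ℕ) ≠ 0 →
      (σ α * σ β).trace = if α = β then 1 else 0)
    (hσbasis : Submodule.span ℂ (Set.range σ) = ⊤)
    (hU : mpoOp d D A N ∈ Matrix.unitaryGroup (Fin N → Fin d) ℂ)
    (hcan : ∀ k, k < N →
      ((d : ℂ))⁻¹ • ∑ i, ∑ j, (A k i j)ᴴ * (A k i j) = 1) :
    ∀ k, 1 ≤ k → k ≤ N →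
      (matHat (rhoChain d D A k)).PosSemidef ∧
      (matHat (rhoChain d D A k)).trace = 1 ∧
      ∀ X ∈ Sspan d D A σ k, (matHat X).IsHermitian ∧ (matHat X).trace = 0 := by
  have hdd : 0 < d * d := Nat.mul_pos (by omega) (by omega)
  have hd0 : (d : ℂ) ≠ 0 := Nat.cast_ne_zero.2 (by omega)
  have htau0 : ∀ α : Fin (d * d), (α : ℕ) = 0 → tauMat d σ α = (d : ℂ)⁻¹ • 1 := by
    intro α h
    simp [tauMat, h, hσ0 α h]
  have htauh : ∀ α : Fin (d * d), (tauMat d σ α).IsHermitian := by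
    intro α
    by_cases h : (α : ℕ) = 0
    · rw [htau0 α h]
      simp [Matrix.IsHermitian, Matrix.conjTranspose_smul]
    · simpa [tauMat, h] using hσherm α h
  have hherm : ∀ (k : ℕ) (α : Fin k → Fin (d * d)),
      (matHat (Schain d D A σ k α)).IsHermitian := by
    intro k
    induction k with
    | zero => intro α; rw [Schain, matHat_one hD0]; exact Matrix.isHermitian_one
    | succ k ih =>
      intro α
      rw [Schain, Ssite_eq]
      exact herm_Smat _ _ (htauh _) _ (ih _)
  have htr : ∀ k, k ≤ N → ∀ α : Fin k → Fin (d * d), (∃ t, (α t : ℕ) ≠ 0) →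
      (matHat (Schain d D A σ k α)).trace = 0 := by
    intro k hk
    induction hk using Nat.decreasingInduction with
    | self =>
      rintro α ⟨t, ht⟩
      rw [trace_Schain_top d D A σ N hD0 hDN hU]
      refine Finset.prod_eq_zero (Finset.mem_univ t) ?_
      simp [tauMat, ht, hσtr _ ht]
    | of_succ k hk ih =>
      rintro α ⟨t, ht⟩
      have h := ih (Fin.snoc (α := fun _ => Fin (d * d)) α ⟨0, hdd⟩) ⟨t.castSucc, by simpa using ht⟩
      rw [Schain, Ssite_eq, htau0 _ (by simp), trace_Smat_one _ (hcan k hk)] at h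
      simpa using h
  have hrho : ∀ k, k ≤ N → (matHat (rhoChain d D A k)).PosSemidef ∧
      (matHat (rhoChain d D A k)).trace = 1 := by
    intro k
    induction k with
    | zero =>
      intro _
      rw [rhoChain, matHat_one hD0]
      exact ⟨Matrix.PosSemidef.one, by simp [hD0]⟩
    | succ k ih =>
      intro hk
      obtain ⟨h1, h2⟩ := ih (by omega)
      rw [rhoChain, Esite_eq]
      exact ⟨psd_Smat _ _ h1, by rw [trace_Smat_one _ (hcan k hk), h2]⟩
  intro k _ hk
  refine ⟨(hrho k hk).1, (hrho k hk).2, ?_⟩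
  intro X hX
  induction hX using Submodule.span_induction with
  | mem X h =>
    obtain ⟨α, hα, rfl⟩ := h
    exact ⟨hherm k α, htr k hk α hα⟩
  | zero =>
    have : matHat (0 : Matrix (Fin (D k) × Fin (D k)) (Fin (D 0) × Fin (D 0)) ℂ) = 0 := by
      ext; simp [matHat]
    rw [this]
    exact ⟨Matrix.isHermitian_zero, Matrix.trace_zero _ _⟩
  | add X Y _ _ hX hY =>
    have : matHat (X + Y) = matHat X + matHat Y := by
      ext; simp [matHat, Finset.sum_add_distrib]
    rw [this]
    exact ⟨hX.1.add hY.1, by rw [Matrix.trace_add, hX.2, hY.2, add_zero]⟩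
  | smul c X _ hX =>
    have : matHat (c • X) = c • matHat X := by
      ext; simp [matHat, Finset.mul_sum]
    rw [this]
    refine ⟨?_, by rw [Matrix.trace_smul, hX.2, smul_zero]⟩
    rw [Matrix.IsHermitian, Matrix.conjTranspose_smul, hX.1.eq]
    simp

end
end

section
/- Let A_1, …, A_N be a tensor sequence that generates a matrix-product unitary and is in canonical form. For each k = 1, …, N define the linear map V_k : (ℂ^d)^{⊗k} → ℂ^{D_k} ⊗ (ℂ^d)^{⊗k} by ⟨m; i_k … i_1 | V_k | j_k … j_1⟩ = (A_k^{i_k j_k} ⋯ A_1^{i_1 j_1})_{m,1} (the m-th entry of the D_k × 1 matrix product). Then V_k† V_k = 𝟙_{d^k} for every k, i.e., every MPU in canonical form is a sequence of isometries V_1, …, V_N with U = V_N. -/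
open Matrix Kronecker

noncomputable section

/-- The partial contraction `V_k`, a map from `(ℂ^d)^{⊗k}` to `ℂ^{D_k} ⊗ (ℂ^d)^{⊗k}`. -/
def Viso (d : ℕ) (D : ℕ → ℕ)
    (A : ∀ k : ℕ, Fin d → Fin d → Matrix (Fin (D (k + 1))) (Fin (D k)) ℂ) (k : ℕ) :
    Matrix (Fin (D k) × (Fin k → Fin d)) (Fin k → Fin d) ℂ :=
  Matrix.of fun mi j => ∑ n, mpoProd d D A k mi.2 j mi.1 n

/-- The column vector of the partial matrix product. -/
def wvec (d : ℕ) (D : ℕ → ℕ)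
    (A : ∀ k : ℕ, Fin d → Fin d → Matrix (Fin (D (k + 1))) (Fin (D k)) ℂ) (k : ℕ)
    (i j : Fin k → Fin d) : Fin (D k) → ℂ :=
  mpoProd d D A k i j *ᵥ 1

theorem Viso_eq_wvec (d : ℕ) (D : ℕ → ℕ)
    (A : ∀ k : ℕ, Fin d → Fin d → Matrix (Fin (D (k + 1))) (Fin (D k)) ℂ) (k : ℕ)
    (m : Fin (D k)) (i j : Fin k → Fin d) : Viso d D A k (m, i) j = wvec d D A k i j m := by
  simp [Viso, wvec, mulVec, dotProduct]

theorem gram_eq (d : ℕ) (D : ℕ → ℕ)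
    (A : ∀ k : ℕ, Fin d → Fin d → Matrix (Fin (D (k + 1))) (Fin (D k)) ℂ) (k : ℕ)
    (j' j : Fin k → Fin d) : ((Viso d D A k)ᴴ * Viso d D A k) j' j =
      ∑ i, star (wvec d D A k i j') ⬝ᵥ wvec d D A k i j := by
  rw [Matrix.mul_apply, Fintype.sum_prod_type_right]
  simp [conjTranspose_apply, Viso_eq_wvec, dotProduct]

theorem wvec_snoc (d : ℕ) (D : ℕ → ℕ)
    (A : ∀ k : ℕ, Fin d → Fin d → Matrix (Fin (D (k + 1))) (Fin (D k)) ℂ) (k : ℕ)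
    (i j : Fin k → Fin d) (a b : Fin d) :
    wvec d D A (k + 1) (Fin.snoc (α := fun _ => Fin d) i a)
      (Fin.snoc (α := fun _ => Fin d) j b) = A k a b *ᵥ wvec d D A k i j := by
  simp [wvec, mpoProd, mulVec_mulVec]

theorem gram_step (d : ℕ) (hd : 2 ≤ d) (D : ℕ → ℕ)
    (A : ∀ k : ℕ, Fin d → Fin d → Matrix (Fin (D (k + 1))) (Fin (D k)) ℂ) (k : ℕ)
    (hcan : ((d : ℂ))⁻¹ • ∑ i, ∑ j, (A k i j)ᴴ * (A k i j) = 1)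
    (h : (Viso d D A (k + 1))ᴴ * Viso d D A (k + 1) = 1) :
    (Viso d D A k)ᴴ * Viso d D A k = 1 := by
  have hd0 : (d : ℂ) ≠ 0 := by
    have : d ≠ 0 := by omega
    exact_mod_cast this
  have hc : ∑ i, ∑ j, (A k i j)ᴴ * (A k i j) = (d : ℂ) • (1 : Matrix _ _ ℂ) := by
    rw [← hcan, smul_smul, mul_inv_cancel₀ hd0, one_smul]
  ext j' j
  have h1 : ∑ b, ((Viso d D A (k + 1))ᴴ * Viso d D A (k + 1))
      (Fin.snoc (α := fun _ => Fin d) j' b) (Fin.snoc (α := fun _ => Fin d) j b) =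
      d * ((Viso d D A k)ᴴ * Viso d D A k) j' j := by
    have h2 : ∀ b, ((Viso d D A (k + 1))ᴴ * Viso d D A (k + 1))
        (Fin.snoc (α := fun _ => Fin d) j' b) (Fin.snoc (α := fun _ => Fin d) j b) =
        ∑ a, ∑ i, star (wvec d D A k i j') ⬝ᵥ
          (((A k a b)ᴴ * A k a b) *ᵥ wvec d D A k i j) := by
      intro b
      rw [gram_eq, ← (Fin.snocEquiv (fun _ => Fin d)).sum_comp, Fintype.sum_prod_type]
      refine Finset.sum_congr rfl fun a _ => Finset.sum_congr rfl fun i _ => ?_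
      change star (wvec d D A (k + 1) (Fin.snoc (α := fun _ => Fin d) i a) _) ⬝ᵥ
        wvec d D A (k + 1) (Fin.snoc (α := fun _ => Fin d) i a) _ = _
      rw [wvec_snoc, wvec_snoc, star_mulVec, ← dotProduct_mulVec, mulVec_mulVec]
    simp_rw [h2]
    rw [gram_eq, Finset.mul_sum, Finset.sum_comm]
    have h3 : ∀ i, (d : ℂ) * (star (wvec d D A k i j') ⬝ᵥ wvec d D A k i j) =
        ∑ a, ∑ b, star (wvec d D A k i j') ⬝ᵥ
          (((A k a b)ᴴ * A k a b) *ᵥ wvec d D A k i j) := by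
      intro i
      simp_rw [← dotProduct_sum, ← sum_mulVec]
      rw [hc, smul_mulVec, one_mulVec, dotProduct_smul, smul_eq_mul]
    simp_rw [h3]
    rw [Finset.sum_comm]
    refine (Finset.sum_congr rfl fun _ _ => Finset.sum_comm).trans ?_
    rw [Finset.sum_comm]
    refine (Finset.sum_congr rfl fun _ _ => Finset.sum_comm).trans ?_
    first
      | rfl
      | exact Finset.sum_congr rfl fun _ _ => Finset.sum_comm
  rw [h] at h1
  have h4 : ∀ b : Fin d, (1 : Matrix (Fin (k + 1) → Fin d) (Fin (k + 1) → Fin d) ℂ)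
      (Fin.snoc (α := fun _ => Fin d) j' b) (Fin.snoc (α := fun _ => Fin d) j b) =
      (1 : Matrix (Fin k → Fin d) (Fin k → Fin d) ℂ) j' j := by
    intro b
    simp [Matrix.one_apply]
  simp_rw [h4] at h1
  simp only [Finset.sum_const, Finset.card_univ, Fintype.card_fin, nsmul_eq_mul] at h1
  exact (mul_left_cancel₀ hd0 h1).symm

/-- Every matrix-product unitary in canonical form is a sequence of
isometries: `V_k† V_k = 𝟙` for every `k = 1, …, N`, and `U = V_N`. -/
theorem stmt_4 (N d : ℕ) (hN : 1 ≤ N) (hd : 2 ≤ d) (D : ℕ → ℕ)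
    (hD0 : D 0 = 1) (hDN : D N = 1) (hDpos : ∀ k, k ≤ N → 1 ≤ D k)
    (A : ∀ k : ℕ, Fin d → Fin d → Matrix (Fin (D (k + 1))) (Fin (D k)) ℂ)
    (hU : mpoOp d D A N ∈ Matrix.unitaryGroup (Fin N → Fin d) ℂ)
    (hcan : ∀ k, k < N →
      ((d : ℂ))⁻¹ • ∑ i, ∑ j, (A k i j)ᴴ * (A k i j) = 1) :
    (∀ k, 1 ≤ k → k ≤ N → (Viso d D A k)ᴴ * Viso d D A k = 1) ∧
    (∀ i j : Fin N → Fin d, mpoOp d D A N i j = ∑ m, Viso d D A N (m, i) j) := by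
  have hV : ∀ i j : Fin N → Fin d, mpoOp d D A N i j = ∑ m, Viso d D A N (m, i) j := by
    intro i j
    simp [mpoOp, Viso]
  refine ⟨?_, hV⟩
  have hbase : (Viso d D A N)ᴴ * Viso d D A N = 1 := by
    rw [← Matrix.mem_unitaryGroup_iff'.mp hU, Matrix.star_eq_conjTranspose]
    haveI : Unique (Fin (D N)) := (Equiv.cast (by rw [hDN] : Fin (D N) = Fin 1)).unique
    ext j' j
    simp only [Matrix.mul_apply, conjTranspose_apply, hV, Fintype.sum_prod_type]
    simp
  intro k _ hk
  induction hk using Nat.decreasingInduction with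
  | self => exact hbase
  | of_succ k hk ih => exact gram_step d hd D A k (hcan k hk) (ih (by omega))

end
end

section
/- For every N ≥ 2 there exist two-qubit unitaries W̃_1, …, W̃_N and X̃_2, …, X̃_N on ℂ² ⊗ ℂ² such that, for ALL two-qubit unitaries W_1, …, W_N and X_2, …, X_N, the spatially reflected two-floor staircase circuit R · C(W̃, X̃) · R is NOT equal to C(W, X). In other words, the class of two-floor staircase circuits of a fixed orientation is not closed under spatial reflection. -/
open Matrix

noncomputable section

/-- A two-qubit gate `G` acting on the adjacent qubits `k, k+1` (0-based: `k.castSucc`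
and `k.succ`) of a chain of `N+1` qubits, tensored with the identity elsewhere. -/
def embed2 (N : ℕ) (k : Fin N) (G : Matrix (Fin 2 × Fin 2) (Fin 2 × Fin 2) ℂ) :
    Matrix (Fin (N + 1) → Fin 2) (Fin (N + 1) → Fin 2) ℂ :=
  Matrix.of fun x y =>
    if ∀ m : Fin (N + 1), m ≠ k.castSucc → m ≠ k.succ → x m = y m then
      G (x k.castSucc, x k.succ) (y k.castSucc, y k.succ)
    else 0

/-- The ascending staircase `W_N^{(N,N+1)} ⋯ W_2^{(2,3)} W_1^{(1,2)}`
(`W t` is gate `W_{t+1}`, acting on qubits `t+1, t+2` in 1-based labeling). -/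
def ascStair (N : ℕ) (W : Fin N → Matrix (Fin 2 × Fin 2) (Fin 2 × Fin 2) ℂ) :
    Matrix (Fin (N + 1) → Fin 2) (Fin (N + 1) → Fin 2) ℂ :=
  ((List.finRange N).reverse.map (fun k => embed2 N k (W k))).prod

/-- The descending staircase `X_2^{(2,3)} X_3^{(3,4)} ⋯ X_N^{(N,N+1)}`
(`X t` for `t ≥ 1` is gate `X_{t+1}`; `X 0` is unused). -/
def descStair (N : ℕ) (X : Fin N → Matrix (Fin 2 × Fin 2) (Fin 2 × Fin 2) ℂ) :
    Matrix (Fin (N + 1) → Fin 2) (Fin (N + 1) → Fin 2) ℂ :=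
  (((List.finRange N).drop 1).map (fun k => embed2 N k (X k))).prod

/-- The two-floor staircase circuit `C(W, X)`: the descending staircase is applied
first, then the ascending one. -/
def twoFloor (N : ℕ) (W X : Fin N → Matrix (Fin 2 × Fin 2) (Fin 2 × Fin 2) ℂ) :
    Matrix (Fin (N + 1) → Fin 2) (Fin (N + 1) → Fin 2) ℂ :=
  ascStair N W * descStair N X

/-- The unitary reversing the order of the `N+1` qubits. -/
def revOp (N : ℕ) : Matrix (Fin (N + 1) → Fin 2) (Fin (N + 1) → Fin 2) ℂ :=
  Matrix.of fun x y => if ∀ m, x m = y m.rev then 1 else 0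

abbrev G4 := Matrix (Fin 2 × Fin 2) (Fin 2 × Fin 2) ℂ

/-- replace the values at the qubits `k, k+1`. -/
def upd {N : ℕ} (k : Fin N) (y : Fin (N + 1) → Fin 2) (p : Fin 2 × Fin 2) : Fin (N + 1) → Fin 2 :=
  Function.update (Function.update y k.castSucc p.1) k.succ p.2

lemma upd_left {N : ℕ} (k : Fin N) (y : Fin (N + 1) → Fin 2) (p : Fin 2 × Fin 2) :
    upd k y p k.castSucc = p.1 := by
  have h : k.castSucc ≠ k.succ := (Fin.castSucc_lt_succ).ne
  simp [upd, Function.update_of_ne h]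

lemma upd_right {N : ℕ} (k : Fin N) (y : Fin (N + 1) → Fin 2) (p : Fin 2 × Fin 2) :
    upd k y p k.succ = p.2 := by
  simp [upd]

lemma upd_ne {N : ℕ} (k : Fin N) (y : Fin (N + 1) → Fin 2) (p : Fin 2 × Fin 2) (m : Fin (N + 1))
    (h1 : m ≠ k.castSucc) (h2 : m ≠ k.succ) : upd k y p m = y m := by
  simp [upd, Function.update_of_ne h1, Function.update_of_ne h2]

lemma mul_embed2 {N : ℕ} (k : Fin N) (G : G4)
    (M : Matrix (Fin (N + 1) → Fin 2) (Fin (N + 1) → Fin 2) ℂ) (x y : Fin (N + 1) → Fin 2) :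
    (M * embed2 N k G) x y = ∑ p, M x (upd k y p) * G p (y k.castSucc, y k.succ) := by
  rw [Matrix.mul_apply]
  symm
  apply Fintype.sum_of_injective (upd k y)
  · intro p q h
    ext1
    · rw [← upd_left k y p, h, upd_left]
    · rw [← upd_right k y p, h, upd_right]
  · intro z hz
    rw [embed2, Matrix.of_apply, if_neg, mul_zero]
    intro h
    apply hz
    refine ⟨(z k.castSucc, z k.succ), ?_⟩
    funext m
    by_cases h1 : m = k.castSucc
    · subst h1; rw [upd_left]
    by_cases h2 : m = k.succ
    · subst h2; rw [upd_right]
    rw [upd_ne _ _ _ _ h1 h2, h m h1 h2]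
  · intro p
    rw [embed2, Matrix.of_apply, if_pos, upd_left, upd_right]
    intro m h1 h2
    rw [upd_ne _ _ _ _ h1 h2]

lemma embed2_mul {N : ℕ} (k : Fin N) (G H : G4) :
    embed2 N k G * embed2 N k H = embed2 N k (G * H) := by
  ext x y
  rw [mul_embed2]
  have h : ∀ p, embed2 N k G x (upd k y p) =
      if ∀ m : Fin (N + 1), m ≠ k.castSucc → m ≠ k.succ → x m = y m then
      G (x k.castSucc, x k.succ) p else 0 := by
    intro p
    rw [embed2, Matrix.of_apply, upd_left, upd_right]
    congr 1
    apply propext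
    refine forall_congr' fun m => forall_congr' fun h1 => forall_congr' fun h2 => ?_
    rw [upd_ne _ _ _ _ h1 h2]
  simp only [h]
  rw [embed2, Matrix.of_apply]
  split_ifs
  · rw [Matrix.mul_apply]
  · simp

lemma embed2_one {N : ℕ} (k : Fin N) : embed2 N k 1 = 1 := by
  ext x y
  rw [embed2, Matrix.of_apply, Matrix.one_apply, Matrix.one_apply]
  by_cases h : x = y
  · subst h; simp
  · rw [if_neg h]
    split_ifs with h1 h2
    · exfalso
      apply h
      funext m
      simp only [Prod.mk.injEq] at h2
      by_cases e1 : m = k.castSucc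
      · subst e1; exact h2.1
      by_cases e2 : m = k.succ
      · subst e2; exact h2.2
      exact h1 m e1 e2
    · rfl
    · rfl

lemma embed2_star {N : ℕ} (k : Fin N) (G : G4) : (embed2 N k G)ᴴ = embed2 N k Gᴴ := by
  ext x y
  simp only [Matrix.conjTranspose_apply, embed2, Matrix.of_apply]
  have : (∀ m : Fin (N + 1), m ≠ k.castSucc → m ≠ k.succ → y m = x m) ↔
    (∀ m : Fin (N + 1), m ≠ k.castSucc → m ≠ k.succ → x m = y m) := by
    simp only [eq_comm]
  simp only [this]
  split_ifs <;> simp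

lemma embed2_sub {N : ℕ} (k : Fin N) (G H : G4) (t d : ℂ) :
    embed2 N k (t • G - d • H) = t • embed2 N k G - d • embed2 N k H := by
  ext x y
  simp only [Matrix.sub_apply, Matrix.smul_apply, embed2, Matrix.of_apply]
  split_ifs <;> simp

lemma embed2_unitary {N : ℕ} (k : Fin N) (G : G4) (h : G ∈ Matrix.unitaryGroup (Fin 2 × Fin 2) ℂ) :
    embed2 N k G ∈ Matrix.unitaryGroup (Fin (N + 1) → Fin 2) ℂ := by
  rw [Matrix.mem_unitaryGroup_iff] at h ⊢
  rw [star_eq_conjTranspose] at *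
  rw [embed2_star, embed2_mul, h, embed2_one]

/-- one-qubit operator on the first of two qubits -/
def fst4 (e : Matrix (Fin 2) (Fin 2) ℂ) : G4 :=
  Matrix.of fun p q => if p.2 = q.2 then e p.1 q.1 else 0

lemma embed2_fst4 {N : ℕ} (e : Matrix (Fin 2) (Fin 2) ℂ) (x y : Fin (N + 2) → Fin 2) :
    embed2 (N + 1) 0 (fst4 e) x y = if ∀ m, m ≠ 0 → x m = y m then e (x 0) (y 0) else 0 := by
  simp only [embed2, fst4, Matrix.of_apply, ← ite_and]
  congr 1
  apply propext
  constructor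
  · rintro ⟨h1, h2⟩ m hm
    by_cases e2 : m = (0 : Fin (N + 1)).succ
    · subst e2; exact h2
    · exact h1 m (by simpa using hm) e2
  · intro h
    exact ⟨fun m h1 _ => h m (by simpa using h1), h _ (Fin.succ_ne_zero _)⟩

lemma commute_aux {N : ℕ} (k : Fin N) (G : G4) (e : Matrix (Fin 2) (Fin 2) ℂ) :
    Commute (embed2 (N + 1) 0 (fst4 e)) (embed2 (N + 1) k.succ G) := by
  have k1 : k.succ.castSucc ≠ 0 := by
    rw [← Fin.succ_castSucc]; exact Fin.succ_ne_zero _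
  have k2 : k.succ.succ ≠ 0 := Fin.succ_ne_zero _
  ext x y
  rw [Matrix.mul_apply, Matrix.mul_apply]
  rw [Finset.sum_eq_single (Function.update x 0 (y 0)),
    Finset.sum_eq_single (Function.update y 0 (x 0))]
  · simp only [embed2_fst4]
    simp only [embed2, Matrix.of_apply, Function.update_of_ne k1, Function.update_of_ne k2,
      Function.update_self]
    have q1 : ∀ m, m ≠ 0 → x m = Function.update x 0 (y 0) m := by
      intro m hm; simp [Function.update_of_ne hm]
    have q2 : ∀ m, m ≠ 0 → Function.update y 0 (x 0) m = y m := by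
      intro m hm; simp [Function.update_of_ne hm]
    rw [if_pos q1, if_pos q2]
    · rw [mul_comm]
      congr 1
      congr 1
      apply propext
      refine forall_congr' fun m => forall_congr' fun h1 => forall_congr' fun h2 => ?_
      by_cases hm : m = 0
      · subst hm; simp
      · simp [Function.update_of_ne hm]
  · intro z _ hz
    rw [embed2_fst4]
    split_ifs with h
    · rw [embed2, Matrix.of_apply, if_neg, zero_mul]
      intro h'
      apply hz
      funext m
      by_cases hm : m = 0
      · subst hm; simp [h' 0 k1.symm k2.symm]
      · simp [Function.update_of_ne hm, h m hm]
    · simp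
  · simp
  · intro z _ hz
    rw [embed2_fst4]
    split_ifs with h
    · rw [embed2, Matrix.of_apply, if_neg, mul_zero]
      intro h'
      apply hz
      funext m
      by_cases hm : m = 0
      · subst hm; simp [h' 0 k1.symm k2.symm]
      · simp [Function.update_of_ne hm, h m hm]
    · simp
  · simp

def e0 : Matrix (Fin 2) (Fin 2) ℂ := !![1, 0; 0, 0]
def f0 : Matrix (Fin 2) (Fin 2) ℂ := !![0, 1; 0, 0]

lemma small_quad (H : G4) : ∃ t d : ℂ,
    (fst4 e0 * H * fst4 e0) * (fst4 e0 * H * fst4 e0) =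
      t • (fst4 e0 * H * fst4 e0) - d • fst4 e0 := by
  refine ⟨H (0, 0) (0, 0) + H (0, 1) (0, 1),
    H (0, 0) (0, 0) * H (0, 1) (0, 1) - H (0, 0) (0, 1) * H (0, 1) (0, 0), ?_⟩
  ext ⟨i, j⟩ ⟨k, l⟩
  fin_cases i <;> fin_cases j <;> fin_cases k <;> fin_cases l <;>
    simp [Matrix.mul_apply, Fintype.sum_prod_type, fst4, e0] <;> ring

/-- the test operator -/
def Zop {N : ℕ} (V : Matrix (Fin (N + 2) → Fin 2) (Fin (N + 2) → Fin 2) ℂ) :=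
  embed2 (N + 1) 0 (fst4 e0) * V * embed2 (N + 1) 0 (fst4 f0) * Vᴴ * embed2 (N + 1) 0 (fst4 e0)

lemma Zop_quad {N : ℕ} (P Q : Matrix (Fin (N + 2) → Fin 2) (Fin (N + 2) → Fin 2) ℂ) (G : G4)
    (hP : P ∈ Matrix.unitaryGroup (Fin (N + 2) → Fin 2) ℂ)
    (hQ : Q ∈ Matrix.unitaryGroup (Fin (N + 2) → Fin 2) ℂ)
    (cP : ∀ e, Commute (embed2 (N + 1) 0 (fst4 e)) P)
    (cQ : ∀ e, Commute (embed2 (N + 1) 0 (fst4 e)) Q) :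
    ∃ t d : ℂ, Zop (P * embed2 (N + 1) 0 G * Q) * Zop (P * embed2 (N + 1) 0 G * Q) =
      t • Zop (P * embed2 (N + 1) 0 G * Q) - d • embed2 (N + 1) 0 (fst4 e0) := by
  have hP1 : P * Pᴴ = 1 := Matrix.mem_unitaryGroup_iff.1 hP
  have hP2 : Pᴴ * P = 1 := Matrix.mem_unitaryGroup_iff'.1 hP
  have hQ1 : Q * Qᴴ = 1 := Matrix.mem_unitaryGroup_iff.1 hQ
  obtain ⟨t, d, h⟩ := small_quad (G * fst4 f0 * Gᴴ)
  refine ⟨t, d, ?_⟩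
  have h' := congrArg (embed2 (N + 1) 0) h
  rw [embed2_sub, ← embed2_mul] at h'
  set E := embed2 (N + 1) 0 (fst4 e0) with hE
  set F := embed2 (N + 1) 0 (fst4 f0) with hF
  set T := embed2 (N + 1) 0 (fst4 e0 * (G * fst4 f0 * Gᴴ) * fst4 e0) with hT
  set g := embed2 (N + 1) 0 G with hg
  have hT' : T = E * (g * F * gᴴ) * E := by
    simp only [hT, hE, hF, hg, embed2_star, embed2_mul]
  have cPE : E * P = P * E := cP e0
  have cQF : Q * F = F * Q := (cQ f0).symm.eq
  have cPE' : Pᴴ * E = E * Pᴴ := by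
    calc Pᴴ * E = Pᴴ * E * (P * Pᴴ) := by rw [hP1, mul_one]
      _ = Pᴴ * (E * P) * Pᴴ := by simp only [mul_assoc]
      _ = (Pᴴ * P) * E * Pᴴ := by rw [cPE]; simp only [mul_assoc]
      _ = E * Pᴴ := by rw [hP2, one_mul]
  have hZ : Zop (P * g * Q) = P * T * Pᴴ := by
    calc Zop (P * g * Q) = (E * P) * g * (Q * F) * Qᴴ * gᴴ * (Pᴴ * E) := by
          simp only [Zop, Matrix.conjTranspose_mul, mul_assoc, ← hE, ← hF]
      _ = P * (E * (g * F * (Q * Qᴴ) * gᴴ) * E) * Pᴴ := by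
          rw [cPE, cQF, cPE']; simp only [mul_assoc]
      _ = P * T * Pᴴ := by rw [hQ1, hT', mul_one]
  rw [hZ]
  calc P * T * Pᴴ * (P * T * Pᴴ) = P * T * (Pᴴ * P) * T * Pᴴ := by simp only [mul_assoc]
    _ = P * (T * T) * Pᴴ := by rw [hP2, mul_one]; simp only [mul_assoc]
    _ = t • (P * T * Pᴴ) - d • (P * E * Pᴴ) := by
        rw [h']; simp [mul_sub, sub_mul]
    _ = _ := by rw [← cPE, mul_assoc E, hP1, mul_one]

lemma twoFloor_form {N : ℕ} (W X : Fin (N + 1) → G4)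
    (hW : ∀ k, W k ∈ Matrix.unitaryGroup (Fin 2 × Fin 2) ℂ)
    (hX : ∀ k, X k ∈ Matrix.unitaryGroup (Fin 2 × Fin 2) ℂ) :
    ∃ t d : ℂ, Zop (twoFloor (N + 1) W X) * Zop (twoFloor (N + 1) W X) =
      t • Zop (twoFloor (N + 1) W X) - d • embed2 (N + 1) 0 (fst4 e0) := by
  have h1 : ascStair (N + 1) W = (((List.finRange N).map Fin.succ).reverse.map
      (fun k => embed2 (N + 1) k (W k))).prod * embed2 (N + 1) 0 (W 0) := by
    simp [ascStair, List.finRange_succ]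
  have h2 : descStair (N + 1) X = (((List.finRange N).map Fin.succ).map
      (fun k => embed2 (N + 1) k (X k))).prod := by
    simp [descStair, List.finRange_succ]
  rw [twoFloor, h1, h2]
  apply Zop_quad
  · apply Submonoid.list_prod_mem
    intro M hM
    obtain ⟨k, _, rfl⟩ := List.mem_map.1 hM
    exact embed2_unitary _ _ (hW k)
  · apply Submonoid.list_prod_mem
    intro M hM
    obtain ⟨k, _, rfl⟩ := List.mem_map.1 hM
    exact embed2_unitary _ _ (hX k)
  · intro e
    apply Commute.list_prod_right
    intro M hM
    obtain ⟨k, hk, rfl⟩ := List.mem_map.1 hM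
    rw [List.mem_reverse] at hk
    obtain ⟨j, _, rfl⟩ := List.mem_map.1 hk
    exact commute_aux _ _ _
  · intro e
    apply Commute.list_prod_right
    intro M hM
    obtain ⟨k, hk, rfl⟩ := List.mem_map.1 hM
    obtain ⟨j, _, rfl⟩ := List.mem_map.1 hk
    exact commute_aux _ _ _

/-! Reflection -/

def revE (N : ℕ) : (Fin (N + 1) → Fin 2) ≃ (Fin (N + 1) → Fin 2) where
  toFun x := fun m => x m.rev
  invFun x := fun m => x m.rev
  left_inv x := by funext m; simp
  right_inv x := by funext m; simp

lemma rev_conj (N : ℕ) (M : Matrix (Fin (N + 1) → Fin 2) (Fin (N + 1) → Fin 2) ℂ) :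
    revOp N * M * revOp N = M.submatrix (revE N) (revE N) := by
  have hR : ∀ x y, revOp N x y = if y = revE N x then 1 else 0 := by
    intro x y
    simp only [revOp, Matrix.of_apply]
    congr 1
    apply propext
    constructor
    · intro h; funext m; simp [revE, h]
    · rintro rfl m; simp [revE]
  have hR' : ∀ x y, revOp N x y = if x = revE N y then 1 else 0 := by
    intro x y
    rw [hR]
    congr 1
    apply propext
    constructor
    · rintro rfl; funext m; simp [revE]
    · rintro rfl; funext m; simp [revE]
  ext x y
  rw [Matrix.mul_apply]
  simp only [hR' _ y, mul_ite, mul_one, mul_zero, Finset.sum_ite_eq', Finset.mem_univ, if_true]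
  rw [Matrix.mul_apply]
  simp [hR x]

lemma rev_embed2 {N : ℕ} (k : Fin N) (G : G4) :
    (embed2 N k G).submatrix (revE N) (revE N) =
      embed2 N k.rev (G.submatrix Prod.swap Prod.swap) := by
  ext x y
  simp only [Matrix.submatrix_apply, embed2, Matrix.of_apply, revE, Equiv.coe_fn_mk,
    Fin.rev_castSucc, Fin.rev_succ, Prod.swap_prod_mk]
  congr 1
  apply propext
  constructor
  · intro h m h1 h2
    have := h m.rev (by rintro h; apply h2; rw [← Fin.rev_rev m, h, Fin.rev_castSucc])
      (by rintro h; apply h1; rw [← Fin.rev_rev m, h, Fin.rev_succ])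
    simpa using this
  · intro h m h1 h2
    apply h
    · rintro h; apply h2; rw [← Fin.rev_rev m, h, Fin.rev_castSucc, Fin.rev_rev]
    · rintro h; apply h1; rw [← Fin.rev_rev m, h, Fin.rev_succ, Fin.rev_rev]

/-! The concrete gates -/

/-- CNOT with control the second qubit and target the first. -/
def gA : G4 := Matrix.of fun p q => if p.2 = q.2 ∧ p.1 = q.1 + q.2 then 1 else 0

/-- Rotation of the first qubit controlled by the second qubit. -/
def gB : G4 := Matrix.of fun p q => if p.2 = q.2 then
  (if p.2 = 0 then (1 : Matrix (Fin 2) (Fin 2) ℂ) p.1 q.1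
    else !![(3/5 : ℂ), -4/5; 4/5, 3/5] p.1 q.1) else 0

lemma gA_unitary : gA * gAᴴ = 1 := by
  ext ⟨i, j⟩ ⟨k, l⟩
  fin_cases i <;> fin_cases j <;> fin_cases k <;> fin_cases l <;>
    simp [Matrix.mul_apply, Fintype.sum_prod_type, gA, Matrix.one_apply]

lemma gB_unitary : gB * gBᴴ = 1 := by
  ext ⟨i, j⟩ ⟨k, l⟩
  fin_cases i <;> fin_cases j <;> fin_cases k <;> fin_cases l <;>
    simp [Matrix.mul_apply, Fintype.sum_prod_type, gB, Matrix.one_apply, map_ofNat] <;> norm_num [map_ofNat]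

lemma swap_unitary (G : G4) (h : G * Gᴴ = 1) :
    G.submatrix Prod.swap Prod.swap ∈ Matrix.unitaryGroup (Fin 2 × Fin 2) ℂ := by
  rw [Matrix.mem_unitaryGroup_iff, star_eq_conjTranspose, Matrix.conjTranspose_submatrix]
  have := Matrix.submatrix_mul_equiv G Gᴴ (Prod.swap) (Equiv.prodComm (Fin 2) (Fin 2)) (Prod.swap)
  rw [Equiv.coe_prodComm] at this
  rw [this, h]
  exact Matrix.submatrix_one_equiv (Equiv.prodComm (Fin 2) (Fin 2))

def Wt0 (n : ℕ) (k : Fin (n + 2)) : G4 :=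
  if k = Fin.last (n + 1) then gA.submatrix Prod.swap Prod.swap else
  if k = (Fin.last n).castSucc then gB.submatrix Prod.swap Prod.swap else 1

def Xt0 (n : ℕ) (k : Fin (n + 2)) : G4 :=
  if k = Fin.last (n + 1) then gA.submatrix Prod.swap Prod.swap else 1

def Vc (n : ℕ) := embed2 (n + 2) 0 gA * embed2 (n + 2) 1 gB * embed2 (n + 2) 0 gA

lemma asc_Wt0 (n : ℕ) : ascStair (n + 2) (Wt0 n) =
    embed2 (n + 2) (Fin.last (n + 1)) (gA.submatrix Prod.swap Prod.swap) *
    embed2 (n + 2) (Fin.last n).castSucc (gB.submatrix Prod.swap Prod.swap) := by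
  rw [ascStair, List.finRange_succ_last, List.finRange_succ_last]
  simp only [List.map_append, List.reverse_append, List.map_cons, List.map_nil, List.reverse_cons,
    List.reverse_nil, List.nil_append, List.prod_append, List.prod_cons, List.prod_nil, mul_one]
  have h : (((List.map Fin.castSucc (List.map Fin.castSucc (List.finRange n))).reverse).map
      (fun k => embed2 (n + 2) k (Wt0 n k))).prod = 1 := by
    apply List.prod_eq_one
    intro M hM
    obtain ⟨k, hk, rfl⟩ := List.mem_map.1 hM
    simp only [List.mem_reverse, List.mem_map] at hk
    obtain ⟨_, ⟨j, _, rfl⟩, rfl⟩ := hk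
    have h1 : j.castSucc.castSucc ≠ Fin.last (n + 1) := (Fin.castSucc_lt_last _).ne
    have h2 : j.castSucc.castSucc ≠ (Fin.last n).castSucc := by
      intro h; exact (Fin.castSucc_lt_last j).ne (Fin.castSucc_injective _ h)
    simp [Wt0, h1, h2, embed2_one]
  have h1 : (Fin.last n).castSucc ≠ Fin.last (n + 1) := (Fin.castSucc_lt_last _).ne
  rw [show Wt0 n (Fin.last (n+1)) = gA.submatrix Prod.swap Prod.swap by simp [Wt0],
    show Wt0 n (Fin.last n).castSucc = gB.submatrix Prod.swap Prod.swap by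
      rw [Wt0, if_neg h1, if_pos rfl]]
  simp only [List.singleton_append, List.map_cons, List.map_append, List.prod_cons, List.prod_append, mul_one, h,
    List.map_nil, List.prod_nil]

lemma desc_Xt0 (n : ℕ) : descStair (n + 2) (Xt0 n) =
    embed2 (n + 2) (Fin.last (n + 1)) (gA.submatrix Prod.swap Prod.swap) := by
  have h0 : (List.finRange (n + 2)).drop 1 =
      (((List.finRange n).map Fin.succ).map Fin.castSucc) ++ [Fin.last (n + 1)] := by
    rw [List.finRange_succ_last, List.finRange_succ]
    simp
  rw [descStair, h0, List.map_append, List.prod_append]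
  have h : ((List.map Fin.castSucc (List.map Fin.succ (List.finRange n))).map
      (fun k => embed2 (n + 2) k (Xt0 n k))).prod = 1 := by
    apply List.prod_eq_one
    intro M hM
    obtain ⟨k, hk, rfl⟩ := List.mem_map.1 hM
    simp only [List.mem_map] at hk
    obtain ⟨_, ⟨j, _, rfl⟩, rfl⟩ := hk
    have h1 : j.succ.castSucc ≠ Fin.last (n + 1) := (Fin.castSucc_lt_last _).ne
    rw [Xt0, if_neg h1, embed2_one]
  rw [h]
  simp [Xt0]

lemma rev_circ (n : ℕ) :
    revOp (n + 2) * twoFloor (n + 2) (Wt0 n) (Xt0 n) * revOp (n + 2) = Vc n := by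
  rw [rev_conj, twoFloor, asc_Wt0, desc_Xt0,
    ← Matrix.submatrix_mul_equiv _ _ _ (revE (n + 2)) _,
    ← Matrix.submatrix_mul_equiv _ _ _ (revE (n + 2)) _]
  simp only [rev_embed2, Vc, Fin.rev_last, Fin.rev_castSucc, Matrix.submatrix_submatrix,
    Prod.swap_swap_eq, Matrix.submatrix_id_id]
  rfl

/-! Kets -/

def bits (n : ℕ) (a b c : Fin 2) : Fin (n + 3) → Fin 2 :=
  Fin.cons a (Fin.cons b (Fin.cons c 0))

def ket (n : ℕ) (a b c : Fin 2) : (Fin (n + 3) → Fin 2) → ℂ := Pi.single (bits n a b c) 1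

lemma embed2_single {N : ℕ} (k : Fin N) (G : G4) (y : Fin (N + 1) → Fin 2) :
    embed2 N k G *ᵥ Pi.single y 1 =
      ∑ p, G p (y k.castSucc, y k.succ) • Pi.single (upd k y p) (1 : ℂ) := by
  ext x
  have := mul_embed2 k G 1 x y
  rw [one_mul] at this
  rw [Matrix.mulVec_single_one, Matrix.col_apply, this, Finset.sum_apply]
  refine Finset.sum_congr rfl fun p _ => ?_
  rw [Pi.smul_apply, smul_eq_mul, mul_comm, Matrix.one_apply, Pi.single_apply]

lemma upd0 (n : ℕ) (a b c : Fin 2) (p : Fin 2 × Fin 2) :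
    upd (0 : Fin (n + 2)) (bits n a b c) p = bits n p.1 p.2 c := by
  funext m
  refine Fin.cases ?_ (fun m => Fin.cases ?_ (fun m => ?_) m) m
  · exact upd_left _ _ _
  · exact upd_right _ _ _
  · rw [upd_ne]
    · simp [bits]
    · exact Fin.succ_ne_zero _
    · intro h; exact Fin.succ_ne_zero _ (Fin.succ_injective _ h)

lemma upd1 (n : ℕ) (a b c : Fin 2) (p : Fin 2 × Fin 2) :
    upd (1 : Fin (n + 2)) (bits n a b c) p = bits n a p.1 p.2 := by
  funext m
  refine Fin.cases ?_ (fun m => Fin.cases ?_ (fun m => Fin.cases ?_ (fun m => ?_) m) m) m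
  · rw [upd_ne]
    · simp [bits]
    · exact (Fin.succ_ne_zero (0 : Fin (n + 2))).symm
    · exact (Fin.succ_ne_zero _).symm
  · exact upd_left _ _ _
  · exact upd_right _ _ _
  · rw [upd_ne]
    · simp [bits]
    · intro h; exact Fin.succ_ne_zero _ (Fin.succ_injective _ h)
    · intro h
      exact Fin.succ_ne_zero _ (Fin.succ_injective _ (Fin.succ_injective _ h))

lemma ket0 (n : ℕ) (G : G4) (a b c : Fin 2) : embed2 (n + 2) 0 G *ᵥ ket n a b c =
    G (0, 0) (a, b) • ket n 0 0 c + G (0, 1) (a, b) • ket n 0 1 c +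
    (G (1, 0) (a, b) • ket n 1 0 c + G (1, 1) (a, b) • ket n 1 1 c) := by
  rw [ket, embed2_single]
  have h1 : bits n a b c (0 : Fin (n + 2)).castSucc = a := rfl
  have h2 : bits n a b c (0 : Fin (n + 2)).succ = b := rfl
  simp only [h1, h2, upd0, Fintype.sum_prod_type, Fin.sum_univ_two, ket]

lemma ket1 (n : ℕ) (G : G4) (a b c : Fin 2) : embed2 (n + 2) 1 G *ᵥ ket n a b c =
    G (0, 0) (b, c) • ket n a 0 0 + G (0, 1) (b, c) • ket n a 0 1 +
    (G (1, 0) (b, c) • ket n a 1 0 + G (1, 1) (b, c) • ket n a 1 1) := by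
  rw [ket, embed2_single]
  have h1 : bits n a b c (1 : Fin (n + 2)).castSucc = b := rfl
  have h2 : bits n a b c (1 : Fin (n + 2)).succ = c := rfl
  simp only [h1, h2, upd1, Fintype.sum_prod_type, Fin.sum_univ_two, ket]

lemma Z000 (n : ℕ) : Zop (Vc n) *ᵥ ket n 0 0 0 = 0 := by
  simp only [Zop, Vc, Matrix.conjTranspose_mul, embed2_star, ← Matrix.mulVec_mulVec]
  simp [ket0, ket1, fst4, e0, f0, gA, gB, Matrix.mulVec_add, Matrix.mulVec_smul]

lemma Z001 (n : ℕ) : ∃ s : ℂ, s ≠ 0 ∧ Zop (Vc n) *ᵥ ket n 0 0 1 = s • ket n 0 1 1 := by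
  refine ⟨-12/25, by norm_num, ?_⟩
  simp only [Zop, Vc, Matrix.conjTranspose_mul, embed2_star, ← Matrix.mulVec_mulVec]
  simp [ket0, ket1, fst4, e0, f0, gA, gB, Matrix.mulVec_add, Matrix.mulVec_smul, smul_smul]
  try norm_num [neg_div]

lemma Z011 (n : ℕ) : ∃ s : ℂ, s ≠ 0 ∧ Zop (Vc n) *ᵥ ket n 0 1 1 = s • ket n 0 0 1 := by
  refine ⟨12/25, by norm_num, ?_⟩
  simp only [Zop, Vc, Matrix.conjTranspose_mul, embed2_star, ← Matrix.mulVec_mulVec]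
  simp [ket0, ket1, fst4, e0, f0, gA, gB, Matrix.mulVec_add, Matrix.mulVec_smul, smul_smul]
  try norm_num [neg_div]

lemma E00 (n : ℕ) (c : Fin 2) :
    embed2 (n + 2) 0 (fst4 e0) *ᵥ ket n 0 0 c = ket n 0 0 c := by
  simp [ket0, fst4, e0]

lemma no_quad (n : ℕ) (t d : ℂ) : Zop (Vc n) * Zop (Vc n) ≠
    t • Zop (Vc n) - d • embed2 (n + 2) 0 (fst4 e0) := by
  intro h
  have h1 := congrArg (fun M => (M *ᵥ ket n 0 0 0) (bits n 0 0 0)) h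
  have h2 := congrArg (fun M => (M *ᵥ ket n 0 0 1) (bits n 0 0 1)) h
  obtain ⟨s, hs, hs'⟩ := Z001 n
  obtain ⟨r, hr, hr'⟩ := Z011 n
  have hb : bits n 0 0 1 ≠ bits n 0 1 1 := by
    intro h; have := congrFun h 1; simp [bits] at this
  simp only [← Matrix.mulVec_mulVec, Matrix.sub_mulVec, Matrix.smul_mulVec, Z000, E00, hs', hr',
    Matrix.mulVec_smul] at h1 h2
  simp [ket] at h1
  simp [ket, hb, h1, hs, hr] at h2

/-- For every `N ≥ 2` there exist two-qubit unitaries `W̃_1, …, W̃_N`,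
`X̃_2, …, X̃_N` such that the spatial reflection of the two-floor staircase circuit
`C(W̃, X̃)` is not equal to any two-floor staircase circuit `C(W, X)` of the original
orientation. -/
theorem stmt_6 (N : ℕ) (hN : 2 ≤ N) :
    ∃ Wt Xt : Fin N → Matrix (Fin 2 × Fin 2) (Fin 2 × Fin 2) ℂ,
      (∀ k, Wt k ∈ Matrix.unitaryGroup (Fin 2 × Fin 2) ℂ) ∧
      (∀ k, Xt k ∈ Matrix.unitaryGroup (Fin 2 × Fin 2) ℂ) ∧
      ∀ W X : Fin N → Matrix (Fin 2 × Fin 2) (Fin 2 × Fin 2) ℂ,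
        (∀ k, W k ∈ Matrix.unitaryGroup (Fin 2 × Fin 2) ℂ) →
        (∀ k, X k ∈ Matrix.unitaryGroup (Fin 2 × Fin 2) ℂ) →
        revOp N * twoFloor N Wt Xt * revOp N ≠ twoFloor N W X := by
  obtain ⟨n, rfl⟩ := Nat.exists_eq_add_of_le' hN
  refine ⟨Wt0 n, Xt0 n, ?_, ?_, ?_⟩
  · intro k
    unfold Wt0
    split_ifs
    · exact swap_unitary _ gA_unitary
    · exact swap_unitary _ gB_unitary
    · exact one_mem _
  · intro k
    unfold Xt0
    split_ifs
    · exact swap_unitary _ gA_unitary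
    · exact one_mem _
  · intro W X hW hX h
    rw [rev_circ] at h
    obtain ⟨t, d, hq⟩ := twoFloor_form W X hW hX
    rw [← h] at hq
    exact no_quad n t d hq

end
end

section
/- Fix N ≥ 2. The matrix-product operator U_N generated by the tensor A with boundary b is unitary if and only if for every string (α_1, …, α_N) ∈ {0, 1, …, d²−1}^N one has Tr(B S_{α_N} ⋯ S_{α_2} S_{α_1}) = 1 when all α_k = 0, and Tr(B S_{α_N} ⋯ S_{α_2} S_{α_1}) = 0 otherwise. -/
open Matrix Kronecker

noncomputable section

/-- The bulk product `A^{i_1 j_1} ⋯ A^{i_N j_N}` of a uniform tensor. -/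
def uProd (d D : ℕ) (A : Fin d → Fin d → Matrix (Fin D) (Fin D) ℂ) (N : ℕ)
    (i j : Fin N → Fin d) : Matrix (Fin D) (Fin D) ℂ :=
  ((List.finRange N).map (fun k => A (i k) (j k))).prod

/-- The matrix-product operator `U_N` generated by the uniform tensor `A` with boundary
matrix `b`:  `⟨i_1 … i_N|U_N|j_1 … j_N⟩ = Tr(b A^{i_1 j_1} ⋯ A^{i_N j_N})`. -/
def uMPO (d D : ℕ) (A : Fin d → Fin d → Matrix (Fin D) (Fin D) ℂ)
    (b : Matrix (Fin D) (Fin D) ℂ) (N : ℕ) :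
    Matrix (Fin N → Fin d) (Fin N → Fin d) ℂ :=
  Matrix.of fun i j => (b * uProd d D A N i j).trace

/-- `Σ_{i,j,j'} M_{j'j} · conj(A^{ij'}) ⊗ A^{ij}` (Kronecker product, entrywise
conjugation). -/
def uSmatM (d D : ℕ) (A : Fin d → Fin d → Matrix (Fin D) (Fin D) ℂ)
    (M : Matrix (Fin d) (Fin d) ℂ) : Matrix (Fin D × Fin D) (Fin D × Fin D) ℂ :=
  ∑ i, ∑ j, ∑ j', M j' j • (((A i j').map (starRingEnd ℂ)) ⊗ₖ (A i j))

/-- `S_α`, where `α = 0` (for which `σ 0 = 𝟙`) carries the extra `1/d` factor, so that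
`S_0 = E` is the transfer matrix. -/
def uS (d D : ℕ) (A : Fin d → Fin d → Matrix (Fin D) (Fin D) ℂ)
    (σ : Fin (d * d) → Matrix (Fin d) (Fin d) ℂ) (α : Fin (d * d)) :
    Matrix (Fin D × Fin D) (Fin D × Fin D) ℂ :=
  (if (α : ℕ) = 0 then ((d : ℂ))⁻¹ else 1) • uSmatM d D A (σ α)

/-- The transfer matrix `E = (1/d) Σ_{i,j} conj(A^{ij}) ⊗ A^{ij}`. -/
def uE (d D : ℕ) (A : Fin d → Fin d → Matrix (Fin D) (Fin D) ℂ) :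
    Matrix (Fin D × Fin D) (Fin D × Fin D) ℂ :=
  ((d : ℂ))⁻¹ • uSmatM d D A 1

/-- The word `S_{α_N} ⋯ S_{α_2} S_{α_1}`. -/
def uSword (d D : ℕ) (A : Fin d → Fin d → Matrix (Fin D) (Fin D) ℂ)
    (σ : Fin (d * d) → Matrix (Fin d) (Fin d) ℂ) (N : ℕ) (α : Fin N → Fin (d * d)) :
    Matrix (Fin D × Fin D) (Fin D × Fin D) ℂ :=
  ((List.finRange N).reverse.map (fun k => uS d D A σ (α k))).prod

lemma aux_kron (D : ℕ) {ι : Type} (l : List ι) (X Y : ι → Matrix (Fin D) (Fin D) ℂ) :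
    (l.map (fun k => X k ⊗ₖ Y k)).prod = (l.map X).prod ⊗ₖ (l.map Y).prod := by
  induction l with
  | nil => simp
  | cons a l ih => simp only [List.map_cons, List.prod_cons, ih, Matrix.mul_kronecker_mul]

lemma aux_conj (D : ℕ) {ι : Type} (l : List ι) (X : ι → Matrix (Fin D) (Fin D) ℂ) :
    (l.map (fun k => (X k).map (starRingEnd ℂ))).prod = ((l.map X).prod).map (starRingEnd ℂ) := by
  induction l with
  | nil => simp
  | cons a l ih => simp only [List.map_cons, List.prod_cons, ih, Matrix.map_mul]

lemma aux_word (d D : ℕ) (A : Fin d → Fin d → Matrix (Fin D) (Fin D) ℂ) (N : ℕ)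
    (M : Fin N → Matrix (Fin d) (Fin d) ℂ) :
    ((List.finRange N).map (fun k => uSmatM d D A (M k))).prod =
      ∑ i : Fin N → Fin d, ∑ j : Fin N → Fin d, ∑ j' : Fin N → Fin d,
        (∏ k, M k (j' k) (j k)) •
          ((uProd d D A N i j').map (starRingEnd ℂ) ⊗ₖ uProd d D A N i j) := by
  have key : ∀ f : Fin N → Matrix (Fin D × Fin D) (Fin D × Fin D) ℂ,
      ((List.finRange N).map f).prod = MultilinearMap.mkPiAlgebraFin ℂ N _ f := by
    intro f
    rw [MultilinearMap.mkPiAlgebraFin_apply, List.ofFn_eq_map]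
  rw [key]
  unfold uSmatM
  rw [MultilinearMap.map_sum]
  refine Finset.sum_congr rfl fun i _ => ?_
  rw [MultilinearMap.map_sum]
  refine Finset.sum_congr rfl fun j _ => ?_
  rw [MultilinearMap.map_sum]
  refine Finset.sum_congr rfl fun j' _ => ?_
  rw [MultilinearMap.map_smul_univ, ← key, aux_kron, aux_conj]
  rfl

lemma aux_trace (d D : ℕ) (A : Fin d → Fin d → Matrix (Fin D) (Fin D) ℂ)
    (b : Matrix (Fin D) (Fin D) ℂ) (N : ℕ) (M : Fin N → Matrix (Fin d) (Fin d) ℂ) :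
    (((b.map (starRingEnd ℂ)) ⊗ₖ b) *
      ((List.finRange N).map (fun k => uSmatM d D A (M k))).prod).trace =
      ∑ j : Fin N → Fin d, ∑ j' : Fin N → Fin d,
        (∏ k, M k (j' k) (j k)) * (star (uMPO d D A b N) * uMPO d D A b N) j' j := by
  rw [aux_word]
  simp only [Finset.mul_sum, Matrix.trace_sum, Matrix.mul_smul, Matrix.trace_smul,
    ← Matrix.mul_kronecker_mul, Matrix.trace_kronecker, Matrix.mul_apply (M := star _),
    smul_eq_mul]
  rw [Finset.sum_comm]
  refine Finset.sum_congr rfl fun j _ => ?_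
  rw [Finset.sum_comm]
  refine Finset.sum_congr rfl fun j' _ => ?_
  refine Finset.sum_congr rfl fun i _ => ?_
  congr 2
  rw [← Matrix.map_mul, Matrix.star_apply]
  simp only [uMPO, Matrix.trace, Matrix.of_apply, star_sum, Matrix.diag_apply, Matrix.map_apply]
  rfl

lemma aux_sword (d D : ℕ) (A : Fin d → Fin d → Matrix (Fin D) (Fin D) ℂ)
    (b : Matrix (Fin D) (Fin D) ℂ) (N : ℕ)
    (σ : Fin (d * d) → Matrix (Fin d) (Fin d) ℂ) (α : Fin N → Fin (d * d)) :
    (((b.map (starRingEnd ℂ)) ⊗ₖ b) * uSword d D A σ N α).trace =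
      (∏ k, (if (α (Fin.rev k) : ℕ) = 0 then ((d : ℂ))⁻¹ else 1)) *
      ∑ j : Fin N → Fin d, ∑ j' : Fin N → Fin d,
        (∏ k, σ (α (Fin.rev k)) (j' k) (j k)) *
          (star (uMPO d D A b N) * uMPO d D A b N) j' j := by
  have key : ∀ f : Fin N → Matrix (Fin D × Fin D) (Fin D × Fin D) ℂ,
      ((List.finRange N).map f).prod = MultilinearMap.mkPiAlgebraFin ℂ N _ f := by
    intro f
    rw [MultilinearMap.mkPiAlgebraFin_apply, List.ofFn_eq_map]
  rw [← aux_trace d D A b N (fun k => σ (α (Fin.rev k)))]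
  unfold uSword uS
  rw [List.finRange_reverse, List.map_map, key]
  simp only [Function.comp_def]
  rw [MultilinearMap.map_smul_univ, ← key, Matrix.mul_smul, Matrix.trace_smul, smul_eq_mul]

lemma aux_one (d N : ℕ) (hd : 2 ≤ d) (σ : Fin (d * d) → Matrix (Fin d) (Fin d) ℂ)
    (hσ0 : ∀ α : Fin (d * d), (α : ℕ) = 0 → σ α = 1)
    (hσtr : ∀ α : Fin (d * d), (α : ℕ) ≠ 0 → (σ α).trace = 0)
    (α : Fin N → Fin (d * d)) :
    (∏ k, (if (α (Fin.rev k) : ℕ) = 0 then ((d : ℂ))⁻¹ else 1)) *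
      ∑ j : Fin N → Fin d, ∑ j' : Fin N → Fin d,
        (∏ k, σ (α (Fin.rev k)) (j' k) (j k)) *
          (1 : Matrix (Fin N → Fin d) (Fin N → Fin d) ℂ) j' j =
      (if ∀ t, (α t : ℕ) = 0 then 1 else 0) := by
  have h1 : ∑ j : Fin N → Fin d, ∑ j' : Fin N → Fin d,
        (∏ k, σ (α (Fin.rev k)) (j' k) (j k)) *
          (1 : Matrix (Fin N → Fin d) (Fin N → Fin d) ℂ) j' j =
        ∏ k, (σ (α (Fin.rev k))).trace := by
    simp only [Matrix.one_apply, mul_ite, mul_one, mul_zero, Finset.sum_ite_eq',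
      Finset.mem_univ, if_true, Matrix.trace, Matrix.diag_apply]
    rw [Finset.prod_univ_sum]
    simp
  have hd0 : (d : ℂ) ≠ 0 := by
    have : d ≠ 0 := by omega
    exact_mod_cast this
  rw [h1, ← Finset.prod_mul_distrib]
  split_ifs with h
  · refine Finset.prod_eq_one fun k _ => ?_
    rw [if_pos (h _), hσ0 _ (h _)]
    simp [hd0]
  · push Not at h
    obtain ⟨t, ht⟩ := h
    refine Finset.prod_eq_zero (Finset.mem_univ (Fin.rev t)) ?_
    rw [Fin.rev_rev, hσtr _ ht, mul_zero]

lemma aux_ext (d N : ℕ) (σ : Fin (d * d) → Matrix (Fin d) (Fin d) ℂ)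
    (hσbasis : Submodule.span ℂ (Set.range σ) = ⊤)
    (X : Matrix (Fin N → Fin d) (Fin N → Fin d) ℂ)
    (h : ∀ α : Fin N → Fin (d * d), ∑ j : Fin N → Fin d, ∑ j' : Fin N → Fin d,
        (∏ k, σ (α k) (j' k) (j k)) * X j' j = 0) : X = 0 := by
  have hc : ∀ p q : Fin d, ∃ c : Fin (d * d) → ℂ,
      ∑ a, c a • σ a = Matrix.single p q (1 : ℂ) := by
    intro p q
    have : Matrix.single p q (1 : ℂ) ∈ Submodule.span ℂ (Set.range σ) := by
      rw [hσbasis]; trivial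
    exact (Submodule.mem_span_range_iff_exists_fun ℂ).1 this
  choose c hc using hc
  ext p q
  have h2 : ∀ j j' : Fin N → Fin d, ∑ α : Fin N → Fin (d * d),
      (∏ k, c (p k) (q k) (α k)) * (∏ k, σ (α k) (j' k) (j k)) =
      if p = j' ∧ q = j then 1 else 0 := by
    intro j j'
    simp only [← Finset.prod_mul_distrib]
    have h3 : ∀ k, ∑ a, c (p k) (q k) a * σ a (j' k) (j k) =
        if p k = j' k ∧ q k = j k then 1 else 0 := by
      intro k
      have := congrFun (congrFun (hc (p k) (q k)) (j' k)) (j k)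
      simpa [Matrix.sum_apply, Matrix.single_apply] using this
    have h4 := Finset.prod_univ_sum (fun _ : Fin N => (Finset.univ : Finset (Fin (d * d))))
      (fun k a => c (p k) (q k) a * σ a (j' k) (j k))
    rw [Fintype.piFinset_univ] at h4
    rw [← h4]
    simp only [h3]
    split_ifs with hh
    · exact Finset.prod_eq_one fun k _ => by simp [hh.1, hh.2]
    · have : ∃ k, ¬ (p k = j' k ∧ q k = j k) := by
        by_contra! hcon
        exact hh ⟨funext fun k => (hcon k).1, funext fun k => (hcon k).2⟩
      obtain ⟨k, hk⟩ := this
      exact Finset.prod_eq_zero (Finset.mem_univ k) (if_neg hk)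
  have h5 : ∑ j : Fin N → Fin d, ∑ j' : Fin N → Fin d,
      (∑ α : Fin N → Fin (d * d),
      (∏ k, c (p k) (q k) (α k)) * (∏ k, σ (α k) (j' k) (j k))) * X j' j = 0 := by
    have h6 : ∑ α : Fin N → Fin (d * d), (∏ k, c (p k) (q k) (α k)) *
      (∑ j : Fin N → Fin d, ∑ j' : Fin N → Fin d,
        (∏ k, σ (α k) (j' k) (j k)) * X j' j) = 0 :=
      Finset.sum_eq_zero fun α _ => by rw [h α, mul_zero]
    rw [← h6]
    simp only [Finset.mul_sum, Finset.sum_mul]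
    conv_rhs => rw [Finset.sum_comm]
    refine Finset.sum_congr rfl fun j _ => ?_
    conv_rhs => rw [Finset.sum_comm]
    refine Finset.sum_congr rfl fun j' _ => ?_
    refine Finset.sum_congr rfl fun α _ => ?_
    ring
  simp only [h2] at h5
  rw [Finset.sum_eq_single q, Finset.sum_eq_single p] at h5
  · simpa using h5
  · intro x _ hx
    rw [if_neg (fun hh => hx hh.1.symm), zero_mul]
  · simp
  · intro x _ hx
    refine Finset.sum_eq_zero fun y _ => ?_
    rw [if_neg (fun hh => hx hh.2.symm), zero_mul]
  · simp

/-- For fixed `N ≥ 2`, the matrix-product operator `U_N` generated by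
the tensor `A` with boundary `b` is unitary iff `Tr(B S_{α_N} ⋯ S_{α_1})` equals `1`
when all `α_k = 0` and `0` otherwise, where `B = conj(b) ⊗ b`. -/
theorem stmt_7 (d D N : ℕ) (hd : 2 ≤ d) (hD : 1 ≤ D) (hN : 2 ≤ N)
    (A : Fin d → Fin d → Matrix (Fin D) (Fin D) ℂ)
    (b : Matrix (Fin D) (Fin D) ℂ)
    (σ : Fin (d * d) → Matrix (Fin d) (Fin d) ℂ)
    (hσ0 : ∀ α : Fin (d * d), (α : ℕ) = 0 → σ α = 1)
    (hσherm : ∀ α : Fin (d * d), (α : ℕ) ≠ 0 → (σ α).IsHermitian)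
    (hσtr : ∀ α : Fin (d * d), (α : ℕ) ≠ 0 → (σ α).trace = 0)
    (hσorth : ∀ α β : Fin (d * d), (α : ℕ) ≠ 0 → (β : ℕ) ≠ 0 →
      (σ α * σ β).trace = if α = β then 1 else 0)
    (hσbasis : Submodule.span ℂ (Set.range σ) = ⊤) :
    uMPO d D A b N ∈ Matrix.unitaryGroup (Fin N → Fin d) ℂ ↔
      ∀ α : Fin N → Fin (d * d),
        (((b.map (starRingEnd ℂ)) ⊗ₖ b) * uSword d D A σ N α).trace =
          (if ∀ t, (α t : ℕ) = 0 then 1 else 0) := by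
  rw [Matrix.mem_unitaryGroup_iff']
  constructor
  · intro hU α
    rw [aux_sword, hU]
    exact aux_one d N hd σ hσ0 hσtr α
  · intro h
    have hd0 : (d : ℂ) ≠ 0 := by
      have : d ≠ 0 := by omega
      exact_mod_cast this
    rw [← sub_eq_zero]
    refine aux_ext d N σ hσbasis _ fun β => ?_
    have h1 := h (fun k => β (Fin.rev k))
    rw [aux_sword, ← aux_one d N hd σ hσ0 hσtr] at h1
    have h2 := mul_left_cancel₀ (Finset.prod_ne_zero_iff.2 fun k _ => by
      split_ifs
      · exact inv_ne_zero hd0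
      · exact one_ne_zero) h1
    simp only [Fin.rev_rev] at h2
    simp only [Matrix.sub_apply, mul_sub, Finset.sum_sub_distrib]
    rw [h2, sub_self]

end
end

section
/- If (A, 𝟙_D) is a semi-simple matrix-product unitary with periodic boundary conditions (b = 𝟙_D, so U_N is unitary for every N ≥ 2), then the MPU factorizes after blocking: there exist an integer q ≥ 1, a real number θ, and a unitary V on ℂ^{d^q} such that for every N ≥ 2, U_{qN} = e^{iθN} V^{⊗N} under the natural identification (ℂ^d)^{⊗qN} ≅ (ℂ^{d^q})^{⊗N}. -/
open Matrix Kronecker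

noncomputable section

/-- The span `𝒜 = span_ℂ{S_α}`. -/
def uAspan (d D : ℕ) (A : Fin d → Fin d → Matrix (Fin D) (Fin D) ℂ)
    (σ : Fin (d * d) → Matrix (Fin d) (Fin d) ℂ) :
    Submodule ℂ (Matrix (Fin D × Fin D) (Fin D × Fin D) ℂ) :=
  Submodule.span ℂ (Set.range (uS d D A σ))

/-- `(A, b)` is a semi-simple matrix-product unitary: `U_N` is unitary for every
`N ≥ 2`, and after a similarity transformation `P` the span `𝒜` admits a direct-sum
decomposition `ℂ^{D²} = V_1 ⊕ ⋯ ⊕ V_r` into jointly invariant subspaces on each of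
which it acts irreducibly. -/
def SemiSimpleMPU (d D : ℕ) (A : Fin d → Fin d → Matrix (Fin D) (Fin D) ℂ)
    (b : Matrix (Fin D) (Fin D) ℂ)
    (σ : Fin (d * d) → Matrix (Fin d) (Fin d) ℂ) : Prop :=
  (∀ N, 2 ≤ N → uMPO d D A b N ∈ Matrix.unitaryGroup (Fin N → Fin d) ℂ) ∧
  ∃ P : Matrix (Fin D × Fin D) (Fin D × Fin D) ℂ, IsUnit P ∧
  ∃ r : ℕ, ∃ V : Fin r → Submodule ℂ ((Fin D × Fin D) → ℂ),
    iSupIndep V ∧ (⨆ i, V i) = ⊤ ∧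
    (∀ S ∈ uAspan d D A σ, ∀ i, ∀ v ∈ V i, (P * S * P⁻¹).mulVec v ∈ V i) ∧
    (∀ i, ∀ W : Submodule ℂ ((Fin D × Fin D) → ℂ), W ≤ V i →
      (∀ S ∈ uAspan d D A σ, ∀ v ∈ W, (P * S * P⁻¹).mulVec v ∈ W) →
      W = ⊥ ∨ W = V i)

open Polynomial in
/-- If all traces of `z^(k+2)` vanish, `z` has no nonzero fixed vector. -/
lemma fixed_eq_zero {n : Type*} [Fintype n] [DecidableEq n] (z : Matrix n n ℂ)
    (hz : ∀ k : ℕ, (z ^ (k + 2)).trace = 0) (v : n → ℂ) (hv : z.mulVec v = v) : v = 0 := by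
  by_contra hv0
  have hpow : ∀ k : ℕ, (z ^ k).mulVec v = v := by
    intro k
    induction k with
    | zero => simp
    | succ k ih => rw [pow_succ, ← Matrix.mulVec_mulVec, hv, ih]
  have hev : ∀ f : ℂ[X], (aeval z f).mulVec v = f.eval 1 • v := by
    intro f
    induction f using Polynomial.induction_on' with
    | add p q hp hq => simp [Matrix.add_mulVec, hp, hq, add_smul]
    | monomial k a =>
      simp [aeval_monomial, Algebra.algebraMap_eq_smul_one, Matrix.smul_mulVec, hpow]
  have htr : ∀ f : ℂ[X], (aeval z (f * X ^ 2)).trace = 0 := by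
    intro f
    induction f using Polynomial.induction_on' with
    | add p q hp hq => rw [add_mul, map_add, Matrix.trace_add, hp, hq, add_zero]
    | monomial k a =>
      rw [monomial_mul_X_pow]
      simp [aeval_monomial, Algebra.algebraMap_eq_smul_one, hz]
  have hp0 : z.charpoly ≠ 0 := (Matrix.charpoly_monic z).ne_zero
  have hroot : z.charpoly.eval 1 = 0 := by
    have h := hev z.charpoly
    rw [Matrix.aeval_self_charpoly, Matrix.zero_mulVec] at h
    rcases smul_eq_zero.mp h.symm with h | h
    · exact h
    · exact absurd h hv0
  obtain ⟨g, hg, hgd⟩ := Polynomial.exists_eq_pow_rootMultiplicity_mul_and_not_dvd z.charpoly hp0 1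
  set m := z.charpoly.rootMultiplicity 1 with hm
  have hm0 : m ≠ 0 := by
    have := (Polynomial.rootMultiplicity_pos hp0).2 hroot
    omega
  have hirr : Irreducible (X - C (1 : ℂ)) := Polynomial.irreducible_X_sub_C 1
  have hco : IsCoprime ((X - C (1 : ℂ)) ^ m) (g * X ^ 2) := by
    apply IsCoprime.pow_left
    apply IsCoprime.mul_right
    · exact (hirr.coprime_iff_not_dvd).2 hgd
    · apply IsCoprime.pow_right
      refine (hirr.coprime_iff_not_dvd).2 ?_
      rw [Polynomial.dvd_iff_isRoot]
      simp
  obtain ⟨a, b, hab⟩ := hco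
  set e := aeval z (b * (g * X ^ 2)) with he
  have hid : IsIdempotentElem e := by
    have h0 : (b * (g * X ^ 2)) * (b * (g * X ^ 2)) =
        b * (g * X ^ 2) - (a * b * X ^ 2) * z.charpoly := by
      have h00 : (a * b * X ^ 2) * z.charpoly =
          (a * b * X ^ 2) * ((X - C (1 : ℂ)) ^ m * g) := congrArg _ hg
      rw [h00]
      generalize (X - C (1 : ℂ)) ^ m = w at hab
      linear_combination (b * (g * X ^ 2)) * hab
    have h1 := congrArg (aeval z) h0
    rw [map_sub, map_mul (aeval z) (a * b * X ^ 2), Matrix.aeval_self_charpoly, mul_zero,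
      sub_zero, map_mul] at h1
    exact h1
  have he0 : e = 0 := by
    have h2 : IsIdempotentElem (Matrix.toLin' e) := by
      rw [IsIdempotentElem, Module.End.mul_eq_comp, ← Matrix.toLin'_mul, hid]
    have h3 : LinearMap.trace ℂ _ (Matrix.toLin' e) = 0 := by
      rw [Matrix.trace_toLin'_eq, he, ← mul_assoc]
      exact htr _
    have h4 := (LinearMap.IsIdempotentElem.trace_eq_zero_iff h2).1 h3
    simpa using h4
  have h5 := hev (b * (g * X ^ 2))
  rw [← he, he0, Matrix.zero_mulVec] at h5
  have h6 : (b * (g * X ^ 2)).eval 1 = 1 := by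
    have := congrArg (Polynomial.eval 1) hab
    simpa [hm0] using this
  rw [h6, one_smul] at h5
  exact hv0 h5.symm

/-- word in the `S(M)` expands into sums over configurations -/
lemma word_expand (d D : ℕ) (A : Fin d → Fin d → Matrix (Fin D) (Fin D) ℂ) (N : ℕ)
    (X : Fin N → Matrix (Fin d) (Fin d) ℂ) :
    (List.ofFn (fun k => uSmatM d D A (X k))).prod =
      ∑ i : Fin N → Fin d, ∑ j : Fin N → Fin d, ∑ j' : Fin N → Fin d,
        (∏ k, X k (j' k) (j k)) •
          (((uProd d D A N i j').map (starRingEnd ℂ)) ⊗ₖ (uProd d D A N i j)) := by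
  induction N with
  | zero =>
    simp [uProd]
  | succ N ih =>
    have hu : ∀ (x y : Fin d) (i j : Fin N → Fin d),
        uProd d D A (N + 1) (Fin.cons x i) (Fin.cons y j) = A x y * uProd d D A N i j := by
      intro x y i j
      simp [uProd, List.finRange_succ, Function.comp_def]
    have hs : ∀ (F : (Fin (N + 1) → Fin d) → Matrix (Fin D × Fin D) (Fin D × Fin D) ℂ),
        ∑ i, F i = ∑ x : Fin d, ∑ i : Fin N → Fin d, F (Fin.cons x i) := by
      intro F
      rw [← Equiv.sum_comp (Fin.consEquiv (fun _ => Fin d)) F, Fintype.sum_prod_type]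
      rfl
    rw [List.ofFn_succ, List.prod_cons, ih]
    simp only [hs, hu, Fin.prod_univ_succ, Fin.cons_zero, Fin.cons_succ]
    rw [uSmatM]
    simp only [Finset.sum_mul, Finset.mul_sum]
    -- move the sums
    have key : ∀ (x y y' : Fin d) (i j j' : Fin N → Fin d),
        (X 0 y' y • (((A x y').map (starRingEnd ℂ)) ⊗ₖ (A x y))) *
          ((∏ k : Fin N, X k.succ (j' k) (j k)) •
            (((uProd d D A N i j').map (starRingEnd ℂ)) ⊗ₖ (uProd d D A N i j))) =
        (X 0 y' y * ∏ k : Fin N, X k.succ (j' k) (j k)) •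
          (((A x y' * uProd d D A N i j').map (starRingEnd ℂ)) ⊗ₖ
            (A x y * uProd d D A N i j)) := by
      intro x y y' i j j'
      rw [Matrix.smul_mul, Matrix.mul_smul, smul_smul, ← Matrix.mul_kronecker_mul, Matrix.map_mul]
    simp only [key]
    rw [Finset.sum_comm (s := (Finset.univ : Finset (Fin d)))]
    refine Finset.sum_congr rfl fun i _ => ?_
    have comm : ∀ (f : Fin d → Fin d → Fin d → (Fin N → Fin d) → (Fin N → Fin d) →
        Matrix (Fin D × Fin D) (Fin D × Fin D) ℂ),
        ∑ j, ∑ j', ∑ x, ∑ y, ∑ y', f x y y' j j' = ∑ x, ∑ y, ∑ j, ∑ y', ∑ j', f x y y' j j' := by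
      intro f
      symm
      calc ∑ x, ∑ y, ∑ j, ∑ y', ∑ j', f x y y' j j'
          = ∑ x, ∑ y, ∑ j, ∑ j', ∑ y', f x y y' j j' :=
            Finset.sum_congr rfl fun x _ => Finset.sum_congr rfl fun y _ =>
              Finset.sum_congr rfl fun j _ => Finset.sum_comm
        _ = ∑ x, ∑ j, ∑ y, ∑ j', ∑ y', f x y y' j j' :=
            Finset.sum_congr rfl fun x _ => Finset.sum_comm
        _ = ∑ x, ∑ j, ∑ j', ∑ y, ∑ y', f x y y' j j' :=
            Finset.sum_congr rfl fun x _ => Finset.sum_congr rfl fun j _ => Finset.sum_comm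
        _ = ∑ j, ∑ x, ∑ j', ∑ y, ∑ y', f x y y' j j' := Finset.sum_comm
        _ = ∑ j, ∑ j', ∑ x, ∑ y, ∑ y', f x y y' j j' :=
            Finset.sum_congr rfl fun j _ => Finset.sum_comm
    exact comm (fun x y y' j j' => (X 0 y' y * ∏ k : Fin N, X k.succ (j' k) (j k)) •
          (((A x y' * uProd d D A N i j').map (starRingEnd ℂ)) ⊗ₖ
            (A x y * uProd d D A N i j)))

lemma trace_word (d D : ℕ) (A : Fin d → Fin d → Matrix (Fin D) (Fin D) ℂ) (N : ℕ)
    (hU : uMPO d D A 1 N ∈ Matrix.unitaryGroup (Fin N → Fin d) ℂ)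
    (X : Fin N → Matrix (Fin d) (Fin d) ℂ) :
    (List.ofFn (fun k => uSmatM d D A (X k))).prod.trace = ∏ k, (X k).trace := by
  rw [word_expand]
  simp only [Matrix.trace_sum, Matrix.trace_smul, Matrix.trace_kronecker]
  have h1 : ∀ i j, (uProd d D A N i j).trace = uMPO d D A 1 N i j := by
    intro i j; simp [uMPO]
  have h2 : ∀ i j, ((uProd d D A N i j).map (starRingEnd ℂ)).trace
      = star (uMPO d D A 1 N i j) := by
    intro i j; rw [← h1]; simp [Matrix.trace]
  simp only [h1, h2]
  have h3 := Matrix.mem_unitaryGroup_iff'.1 hU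
  have h4 : ∀ j' j, ∑ i, star (uMPO d D A 1 N i j') * uMPO d D A 1 N i j
      = if j' = j then 1 else 0 := by
    intro j' j
    have := congrFun (congrFun h3 j') j
    rw [Matrix.mul_apply, Matrix.one_apply] at this
    simpa [Matrix.star_apply] using this
  rw [Finset.sum_comm]
  have h5 : ∀ j : Fin N → Fin d, (∑ i : Fin N → Fin d, ∑ j' : Fin N → Fin d,
      (∏ k, X k (j' k) (j k)) • (star (uMPO d D A 1 N i j') * uMPO d D A 1 N i j))
      = ∏ k, X k (j k) (j k) := by
    intro j
    rw [Finset.sum_comm]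
    simp only [← Finset.smul_sum, h4]
    simp
  simp only [h5]
  simp only [Matrix.trace, Matrix.diag]
  rw [Finset.prod_univ_sum]
  simp

/-- span of the words of length at least `n` in the free algebra -/
def wordSpan (d n : ℕ) : Submodule ℂ (FreeAlgebra ℂ (Matrix (Fin d) (Fin d) ℂ)) :=
  Submodule.span ℂ {w | ∃ l : List (Matrix (Fin d) (Fin d) ℂ), n ≤ l.length ∧
    w = (l.map (FreeAlgebra.ι ℂ)).prod}

lemma wordSpan_mul_left (d n : ℕ) (a : FreeAlgebra ℂ (Matrix (Fin d) (Fin d) ℂ)) :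
    ∀ b ∈ wordSpan d n, a * b ∈ wordSpan d n := by
  induction a using FreeAlgebra.induction with
  | grade0 r =>
    intro b hb
    rw [← Algebra.smul_def]
    exact Submodule.smul_mem _ _ hb
  | grade1 x =>
    intro b hb
    refine Submodule.span_induction ?_ ?_ ?_ ?_ hb
    · rintro w ⟨l, hl, rfl⟩
      exact Submodule.subset_span ⟨x :: l, by simp; omega, by simp⟩
    · simp
    · intro u v _ _ hu hv
      rw [mul_add]; exact Submodule.add_mem _ hu hv
    · intro c u _ hu
      rw [mul_smul_comm]; exact Submodule.smul_mem _ _ hu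
  | mul a b ha hb =>
    intro c hc
    rw [mul_assoc]; exact ha _ (hb _ hc)
  | add a b ha hb =>
    intro c hc
    rw [add_mul]; exact Submodule.add_mem _ (ha _ hc) (hb _ hc)

lemma wordSpan_mul (d : ℕ) (a b : FreeAlgebra ℂ (Matrix (Fin d) (Fin d) ℂ))
    (ha : a ∈ wordSpan d 1) (hb : b ∈ wordSpan d 1) : a * b ∈ wordSpan d 2 := by
  have h := Submodule.mul_mem_mul ha hb
  rw [wordSpan, Submodule.span_mul_span] at h
  refine Submodule.span_mono ?_ h
  rintro _ ⟨_, ⟨l, hl, rfl⟩, _, ⟨l', hl', rfl⟩, rfl⟩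
  exact ⟨l ++ l', by simp; omega, by simp⟩

/-- evaluation homomorphism -/
def evS (d D : ℕ) (A : Fin d → Fin d → Matrix (Fin D) (Fin D) ℂ) :
    FreeAlgebra ℂ (Matrix (Fin d) (Fin d) ℂ) →ₐ[ℂ]
      Matrix (Fin D × Fin D) (Fin D × Fin D) ℂ :=
  FreeAlgebra.lift ℂ (uSmatM d D A)

/-- the character `M ↦ tr M` -/
def chS (d : ℕ) : FreeAlgebra ℂ (Matrix (Fin d) (Fin d) ℂ) →ₐ[ℂ] ℂ :=
  FreeAlgebra.lift ℂ (fun M => M.trace)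

lemma trace_evS (d D : ℕ) (A : Fin d → Fin d → Matrix (Fin D) (Fin D) ℂ)
    (hU : ∀ N, 2 ≤ N → uMPO d D A 1 N ∈ Matrix.unitaryGroup (Fin N → Fin d) ℂ)
    (a : FreeAlgebra ℂ (Matrix (Fin d) (Fin d) ℂ)) (ha : a ∈ wordSpan d 2) :
    (evS d D A a).trace = chS d a := by
  refine Submodule.span_induction ?_ ?_ ?_ ?_ ha
  · rintro w ⟨l, hl, rfl⟩
    have h := trace_word d D A l.length (hU _ hl) (fun k => l.get k)
    have e1 : evS d D A ((l.map (FreeAlgebra.ι ℂ)).prod) = (l.map (uSmatM d D A)).prod := by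
      rw [map_list_prod, List.map_map]
      congr 1
      refine List.map_congr_left fun x _ => ?_
      simp [evS]
    have e2 : chS d ((l.map (FreeAlgebra.ι ℂ)).prod) = (l.map (fun M => M.trace)).prod := by
      rw [map_list_prod, List.map_map]
      congr 1
      refine List.map_congr_left fun x _ => ?_
      simp [chS]
    have e3 : List.ofFn (fun k : Fin l.length => uSmatM d D A (l.get k))
        = l.map (uSmatM d D A) := by
      have h0 := List.map_ofFn (f := l.get) (g := uSmatM d D A)
      rw [List.ofFn_get] at h0
      exact h0.symm
    have e4 : ∏ k : Fin l.length, (l.get k).trace = (l.map (fun M => M.trace)).prod := by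
      rw [← List.prod_ofFn]
      have h0 := List.map_ofFn (f := l.get) (g := fun M => M.trace)
      rw [List.ofFn_get] at h0
      rw [h0]
      rfl
    rw [e1, e2, ← e3, h, e4]
  · simp
  · intro u v _ _ hu hv
    simp [hu, hv]
  · intro c u _ hu
    simp [hu]

lemma uSmatM_add (d D : ℕ) (A : Fin d → Fin d → Matrix (Fin D) (Fin D) ℂ)
    (M M' : Matrix (Fin d) (Fin d) ℂ) :
    uSmatM d D A (M + M') = uSmatM d D A M + uSmatM d D A M' := by
  simp [uSmatM, add_smul, Finset.sum_add_distrib]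

lemma uSmatM_smul (d D : ℕ) (A : Fin d → Fin d → Matrix (Fin D) (Fin D) ℂ)
    (c : ℂ) (M : Matrix (Fin d) (Fin d) ℂ) :
    uSmatM d D A (c • M) = c • uSmatM d D A M := by
  simp [uSmatM, Finset.smul_sum, smul_smul]

lemma uSmatM_zero (d D : ℕ) (A : Fin d → Fin d → Matrix (Fin D) (Fin D) ℂ) :
    uSmatM d D A 0 = 0 := by
  simp [uSmatM]

lemma mem_uAspan_iff (d D : ℕ) (hd : 2 ≤ d) (A : Fin d → Fin d → Matrix (Fin D) (Fin D) ℂ)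
    (σ : Fin (d * d) → Matrix (Fin d) (Fin d) ℂ)
    (hσbasis : Submodule.span ℂ (Set.range σ) = ⊤)
    (S : Matrix (Fin D × Fin D) (Fin D × Fin D) ℂ) :
    S ∈ uAspan d D A σ ↔ ∃ M, S = uSmatM d D A M := by
  constructor
  · intro hS
    refine Submodule.span_induction ?_ ?_ ?_ ?_ hS
    · rintro _ ⟨α, rfl⟩
      exact ⟨_, (uSmatM_smul d D A _ _).symm⟩
    · exact ⟨0, (uSmatM_zero d D A).symm⟩
    · rintro _ _ _ _ ⟨M, rfl⟩ ⟨M', rfl⟩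
      exact ⟨_, (uSmatM_add d D A _ _).symm⟩
    · rintro c _ _ ⟨M, rfl⟩
      exact ⟨_, (uSmatM_smul d D A _ _).symm⟩
  · rintro ⟨M, rfl⟩
    have hM : M ∈ Submodule.span ℂ (Set.range σ) := by rw [hσbasis]; trivial
    refine Submodule.span_induction ?_ ?_ ?_ ?_ hM
    · rintro _ ⟨α, rfl⟩
      set c : ℂ := (if (α : ℕ) = 0 then ((d : ℂ))⁻¹ else 1) with hc
      have hc0 : c ≠ 0 := by
        rw [hc]
        split_ifs
        · have : (d : ℂ) ≠ 0 := by exact_mod_cast (by omega : d ≠ 0)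
          exact inv_ne_zero this
        · exact one_ne_zero
      have : uSmatM d D A (σ α) = c⁻¹ • uS d D A σ α := by
        rw [uS, ← hc, smul_smul, inv_mul_cancel₀ hc0, one_smul]
      rw [this]
      exact Submodule.smul_mem _ _ (Submodule.subset_span ⟨α, rfl⟩)
    · rw [uSmatM_zero]; exact Submodule.zero_mem _
    · intro u v _ _ hu hv
      rw [uSmatM_add]; exact Submodule.add_mem _ hu hv
    · intro c u _ hu
      rw [uSmatM_smul]; exact Submodule.smul_mem _ _ hu

/-- Key: elements of the augmentation ideal killed by the character act as zero. -/
lemma evS_eq_zero (d D : ℕ) (hd : 2 ≤ d) (A : Fin d → Fin d → Matrix (Fin D) (Fin D) ℂ)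
    (σ : Fin (d * d) → Matrix (Fin d) (Fin d) ℂ)
    (hσbasis : Submodule.span ℂ (Set.range σ) = ⊤)
    (hss : SemiSimpleMPU d D A 1 σ)
    (x : FreeAlgebra ℂ (Matrix (Fin d) (Fin d) ℂ)) (hx : x ∈ wordSpan d 1)
    (hx0 : chS d x = 0) : evS d D A x = 0 := by
  obtain ⟨hU, P, hP, r, V, -, hV, hinv, hirr⟩ := hss
  have hPdet : IsUnit P.det := (Matrix.isUnit_iff_isUnit_det P).1 hP
  have hPP : P⁻¹ * P = 1 := Matrix.nonsing_inv_mul P hPdet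
  have hPP' : P * P⁻¹ = 1 := Matrix.mul_nonsing_inv P hPdet
  -- conjugated evaluation
  let ρ : FreeAlgebra ℂ (Matrix (Fin d) (Fin d) ℂ) → Matrix (Fin D × Fin D) (Fin D × Fin D) ℂ :=
    fun y => P * evS d D A y * P⁻¹
  have hρmul : ∀ y y', ρ (y * y') = ρ y * ρ y' := by
    intro y y'
    simp only [ρ, map_mul]
    calc P * (evS d D A y * evS d D A y') * P⁻¹
        = P * evS d D A y * 1 * evS d D A y' * P⁻¹ := by simp [mul_assoc]
      _ = _ := by rw [← hPP]; simp only [mul_assoc]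
  have hρadd : ∀ y y', ρ (y + y') = ρ y + ρ y' := by
    intro y y'; simp only [ρ, map_add, mul_add, add_mul]
  have hρι : ∀ M, ρ (FreeAlgebra.ι ℂ M) = P * uSmatM d D A M * P⁻¹ := by
    intro M; simp [ρ, evS]
  have hρalg : ∀ c : ℂ, ρ (algebraMap ℂ _ c) = c • 1 := by
    intro c
    simp only [ρ, Algebra.algebraMap_eq_smul_one]
    simp [hPP']
  have hVinv : ∀ y i, ∀ v ∈ V i, (ρ y).mulVec v ∈ V i := by
    intro y i
    induction y using FreeAlgebra.induction with
    | grade0 c =>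
      intro v hv
      rw [hρalg, Matrix.smul_mulVec, Matrix.one_mulVec]
      exact Submodule.smul_mem _ _ hv
    | grade1 M =>
      intro v hv
      rw [hρι]
      exact hinv _ ((mem_uAspan_iff d D hd A σ hσbasis _).2 ⟨M, rfl⟩) i v hv
    | mul a b ha hb =>
      intro v hv
      rw [hρmul, ← Matrix.mulVec_mulVec]
      exact ha _ (hb _ hv)
    | add a b ha hb =>
      intro v hv
      rw [hρadd, Matrix.add_mulVec]
      exact Submodule.add_mem _ (ha _ hv) (hb _ hv)
  have hρpow : ∀ y (k : ℕ), ρ y ^ k = ρ (y ^ k) := by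
    intro y k
    induction k with
    | zero =>
      have := hρalg 1
      simp only [map_one, one_smul] at this
      simp [this]
    | succ k ih => rw [pow_succ, pow_succ, hρmul, ih]
  have htr : ∀ y, (ρ y).trace = (evS d D A y).trace := by
    intro y
    simp only [ρ]
    rw [Matrix.trace_mul_comm, ← mul_assoc, hPP, one_mul]
  -- fixed points
  have hfix : ∀ y v, (ρ (y * x)).mulVec v = v → v = 0 := by
    intro y v hv
    refine fixed_eq_zero _ ?_ v hv
    intro k
    have h1 : y * x ∈ wordSpan d 1 := wordSpan_mul_left d 1 y x hx
    have h2 : (y * x) ^ (k + 2) ∈ wordSpan d 2 := by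
      rw [pow_add, pow_two]
      exact wordSpan_mul_left d 2 _ _ (wordSpan_mul d _ _ h1 h1)
    rw [hρpow, htr, trace_evS d D A hU _ h2]
    simp [hx0]
  have hzero : ∀ i, ∀ v ∈ V i, (ρ x).mulVec v = 0 := by
    intro i v hv
    by_contra hne
    let W : Submodule ℂ ((Fin D × Fin D) → ℂ) :=
      { carrier := {w | ∃ y, w = (ρ (y * x)).mulVec v}
        zero_mem' := ⟨0, by simp [ρ]⟩
        add_mem' := by
          rintro _ _ ⟨y, rfl⟩ ⟨y', rfl⟩
          exact ⟨y + y', by rw [add_mul, hρadd, Matrix.add_mulVec]⟩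
        smul_mem' := by
          rintro c _ ⟨y, rfl⟩
          refine ⟨algebraMap ℂ _ c * y, ?_⟩
          rw [mul_assoc, hρmul (algebraMap ℂ _ c), hρalg, Matrix.smul_mul, one_mul, Matrix.smul_mulVec] }
    have hWV : W ≤ V i := by
      rintro _ ⟨y, rfl⟩
      exact hVinv _ i v hv
    have hWinv : ∀ S ∈ uAspan d D A σ, ∀ w ∈ W, (P * S * P⁻¹).mulVec w ∈ W := by
      rintro S hS _ ⟨y, rfl⟩
      obtain ⟨M, rfl⟩ := (mem_uAspan_iff d D hd A σ hσbasis _).1 hS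
      refine ⟨FreeAlgebra.ι ℂ M * y, ?_⟩
      rw [← hρι, Matrix.mulVec_mulVec, ← hρmul, mul_assoc]
    rcases hirr i W hWV hWinv with h | h
    · have : (ρ x).mulVec v ∈ W := ⟨1, by rw [one_mul]⟩
      rw [h] at this
      exact hne (by simpa using this)
    · have : v ∈ W := by rw [h]; exact hv
      obtain ⟨y, hy⟩ := this
      have := hfix y v hy.symm
      apply hne
      rw [this, Matrix.mulVec_zero]
  have hker : (⨆ i, V i) ≤ LinearMap.ker (Matrix.toLin' (ρ x)) := by
    refine iSup_le fun i v hv => ?_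
    rw [LinearMap.mem_ker, Matrix.toLin'_apply]
    exact hzero i v hv
  rw [hV, top_le_iff, LinearMap.ker_eq_top] at hker
  have hρ0 : ρ x = 0 := by simpa using hker
  calc evS d D A x = (P⁻¹ * P) * evS d D A x * (P⁻¹ * P) := by rw [hPP]; simp
    _ = P⁻¹ * ρ x * P := by simp only [ρ, mul_assoc]
    _ = 0 := by rw [hρ0]; simp

/-- The tensor is a unitary times a single bond matrix. -/
lemma tensor_factor (d D : ℕ) (hd : 2 ≤ d) (A : Fin d → Fin d → Matrix (Fin D) (Fin D) ℂ)
    (hA : ∃ i j, A i j ≠ 0)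
    (hS : ∀ M : Matrix (Fin d) (Fin d) ℂ, M.trace = 0 → uSmatM d D A M = 0) :
    ∃ u ∈ Matrix.unitaryGroup (Fin d) ℂ, ∃ M : Matrix (Fin D) (Fin D) ℂ,
      ∀ i j, A i j = u i j • M := by
  have hd0 : (d : ℂ) ≠ 0 := by exact_mod_cast (by omega : d ≠ 0)
  have hE : ∀ M : Matrix (Fin d) (Fin d) ℂ, uSmatM d D A M = M.trace • uE d D A := by
    intro M
    have h := hS (M + (-(M.trace * (d : ℂ)⁻¹)) • 1) (by
      simp [Matrix.trace_add, Matrix.trace_smul, Matrix.trace_one, hd0])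
    rw [uSmatM_add, uSmatM_smul] at h
    rw [uE, smul_smul]
    rw [neg_smul] at h
    exact eq_of_sub_eq_zero (by rw [sub_eq_add_neg]; exact h)
  let B : Fin D → Fin D → Matrix (Fin d) (Fin d) ℂ := fun a b => Matrix.of fun i j => A i j a b
  have hB : ∀ a b c e, (B a b)ᴴ * B c e = uE d D A (a, c) (b, e) • 1 := by
    intro a b c e
    ext j' j
    have h := congrFun (congrFun (hE (Matrix.single j' j 1)) (a, c)) (b, e)
    have h1 : uSmatM d D A (Matrix.single j' j 1) (a, c) (b, e)
        = ∑ i, star (A i j' a b) * A i j c e := by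
      simp only [uSmatM, Matrix.sum_apply, Matrix.smul_apply, Matrix.kroneckerMap_apply,
        Matrix.map_apply, Matrix.single_apply]
      refine Finset.sum_congr rfl fun i _ => ?_
      rw [Finset.sum_eq_single j, Finset.sum_eq_single j']
      · simp
      · intro k _ hk; simp [hk.symm]
      · simp
      · intro k _ hk; simp [hk.symm]
      · simp
    rw [h1] at h
    rw [Matrix.mul_apply]
    simp only [Matrix.conjTranspose_apply, B, Matrix.of_apply]
    rw [h]
    by_cases hj : j' = j
    · subst hj; simp
    · simp [hj, Matrix.trace_single_eq_of_ne]
  obtain ⟨i0, j0, hij⟩ := hA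
  obtain ⟨a, b, hab⟩ : ∃ a b, A i0 j0 a b ≠ 0 := by
    by_contra hcon
    push Not at hcon
    exact hij (by ext a b; exact hcon a b)
  set g := uE d D A (a, a) (b, b) with hg
  have hgr : g = ((∑ i, ‖A i j0 a b‖ ^ 2 : ℝ) : ℂ) := by
    have h := congrFun (congrFun (hB a b a b) j0) j0
    rw [Matrix.mul_apply] at h
    simp only [Matrix.conjTranspose_apply, B, Matrix.of_apply, Matrix.smul_apply,
      Matrix.one_apply_eq, smul_eq_mul, mul_one] at h
    rw [hg, ← h]
    push_cast
    refine Finset.sum_congr rfl fun i _ => ?_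
    rw [← Complex.conj_mul']
    rfl
  set γ : ℝ := ∑ i, ‖A i j0 a b‖ ^ 2 with hγ
  have hγ0 : 0 < γ := by
    refine Finset.sum_pos' (fun i _ => by positivity) ⟨i0, Finset.mem_univ _, ?_⟩
    have : 0 < ‖A i0 j0 a b‖ := norm_pos_iff.2 hab
    positivity
  have hs0 : ((Real.sqrt γ : ℝ) : ℂ) ≠ 0 := by
    exact_mod_cast (Real.sqrt_pos.2 hγ0).ne'
  have hss : ((Real.sqrt γ : ℝ) : ℂ) * ((Real.sqrt γ : ℝ) : ℂ) = g := by
    rw [hgr, ← Complex.ofReal_mul, Real.mul_self_sqrt hγ0.le]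
  set s : ℂ := ((Real.sqrt γ : ℝ) : ℂ) with hsdef
  have hsstar : star s = s := by rw [hsdef]; exact Complex.conj_ofReal _
  have hg0 : g ≠ 0 := by rw [← hss]; exact mul_ne_zero hs0 hs0
  have hu : (s⁻¹ • B a b) ∈ Matrix.unitaryGroup (Fin d) ℂ := by
    rw [Matrix.mem_unitaryGroup_iff', Matrix.star_eq_conjTranspose, Matrix.conjTranspose_smul,
      Matrix.smul_mul, Matrix.mul_smul, hB, ← hg, smul_smul, smul_smul, star_inv₀, hsstar, ← hss]
    have : s⁻¹ * (s⁻¹ * (s * s)) = 1 := by field_simp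
    rw [← mul_assoc] at this
    simp only [mul_assoc] at this ⊢
    rw [this, one_smul]
  have hinv : B a b * (B a b)ᴴ = g • 1 := by
    have h := Matrix.mem_unitaryGroup_iff.1 hu
    rw [Matrix.star_eq_conjTranspose, Matrix.conjTranspose_smul,
      Matrix.smul_mul, Matrix.mul_smul, smul_smul, star_inv₀, hsstar] at h
    rw [← h, smul_smul, ← hss]
    have : s * s * (s⁻¹ * s⁻¹) = 1 := by field_simp
    rw [this, one_smul]
  refine ⟨_, hu, s • (g⁻¹ • Matrix.of fun c e => uE d D A (a, c) (b, e)), ?_⟩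
  intro i j
  ext c e
  have h1 : g • B c e = uE d D A (a, c) (b, e) • B a b := by
    calc g • B c e = (B a b * (B a b)ᴴ) * B c e := by rw [hinv]; simp
      _ = B a b * ((B a b)ᴴ * B c e) := by rw [mul_assoc]
      _ = _ := by rw [hB]; simp
  have h2 := congrFun (congrFun h1 i) j
  simp only [Matrix.smul_apply, smul_eq_mul, B, Matrix.of_apply] at h2 ⊢
  field_simp
  linear_combination h2

lemma uProd_factor (d D : ℕ) (A : Fin d → Fin d → Matrix (Fin D) (Fin D) ℂ)
    (u : Matrix (Fin d) (Fin d) ℂ) (M : Matrix (Fin D) (Fin D) ℂ)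
    (hA : ∀ i j, A i j = u i j • M) (N : ℕ) (i j : Fin N → Fin d) :
    uProd d D A N i j = (∏ k, u (i k) (j k)) • M ^ N := by
  induction N with
  | zero => simp [uProd]
  | succ N ih =>
    have : uProd d D A (N + 1) i j
        = A (i 0) (j 0) * uProd d D A N (fun k => i k.succ) (fun k => j k.succ) := by
      simp [uProd, List.finRange_succ, Function.comp_def]
    rw [this, ih, hA, Fin.prod_univ_succ, Matrix.smul_mul, Matrix.mul_smul, smul_smul, pow_succ']


/-- A semi-simple matrix-product unitary with periodic boundary
conditions (`b = 𝟙_D`) factorizes after blocking: there exist `q ≥ 1`, a phase `θ` and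
a unitary `V` on `ℂ^{d^q}` such that `U_{qN} = e^{iθN} V^{⊗N}` for every `N ≥ 2`
(sites grouped into `N` consecutive blocks of `q`). -/
theorem stmt_9 (d D : ℕ) (hd : 2 ≤ d) (hD : 1 ≤ D)
    (A : Fin d → Fin d → Matrix (Fin D) (Fin D) ℂ)
    (σ : Fin (d * d) → Matrix (Fin d) (Fin d) ℂ)
    (hσ0 : ∀ α : Fin (d * d), (α : ℕ) = 0 → σ α = 1)
    (hσherm : ∀ α : Fin (d * d), (α : ℕ) ≠ 0 → (σ α).IsHermitian)
    (hσtr : ∀ α : Fin (d * d), (α : ℕ) ≠ 0 → (σ α).trace = 0)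
    (hσorth : ∀ α β : Fin (d * d), (α : ℕ) ≠ 0 → (β : ℕ) ≠ 0 →
      (σ α * σ β).trace = if α = β then 1 else 0)
    (hσbasis : Submodule.span ℂ (Set.range σ) = ⊤)
    (hss : SemiSimpleMPU d D A 1 σ) :
    ∃ q, 1 ≤ q ∧ ∃ θ : ℝ, ∃ V : Matrix (Fin q → Fin d) (Fin q → Fin d) ℂ,
      V ∈ Matrix.unitaryGroup (Fin q → Fin d) ℂ ∧
      ∀ N, 2 ≤ N → ∀ i j : Fin (N * q) → Fin d,
        uMPO d D A 1 (N * q) i j =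
          Complex.exp (θ * N * Complex.I) *
            ∏ t : Fin N,
              V (fun s => i (finProdFinEquiv (t, s))) (fun s => j (finProdFinEquiv (t, s))) := by
  have hU := hss.1
  have hd0 : (d : ℂ) ≠ 0 := by exact_mod_cast (by omega : d ≠ 0)
  have hι : ∀ M : Matrix (Fin d) (Fin d) ℂ, FreeAlgebra.ι ℂ M ∈ wordSpan d 1 := fun M =>
    Submodule.subset_span ⟨[M], by simp, by simp⟩
  have hS : ∀ M : Matrix (Fin d) (Fin d) ℂ, M.trace = 0 → uSmatM d D A M = 0 := by
    intro M hM
    have h := evS_eq_zero d D hd A σ hσbasis hss (FreeAlgebra.ι ℂ M) (hι M) (by simpa [chS] using hM)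
    simpa [evS] using h
  have hEid : uE d D A * uE d D A = uE d D A := by
    let M : Matrix (Fin d) (Fin d) ℂ := (d : ℂ)⁻¹ • 1
    have hM : M.trace = 1 := by simp [M, Matrix.trace_smul, Matrix.trace_one, hd0]
    have h := evS_eq_zero d D hd A σ hσbasis hss
      (FreeAlgebra.ι ℂ M * FreeAlgebra.ι ℂ M - FreeAlgebra.ι ℂ M)
      (Submodule.sub_mem _ (wordSpan_mul_left d 1 _ _ (hι M)) (hι M)) (by simp [chS, hM])
    have hEM : evS d D A (FreeAlgebra.ι ℂ M) = uE d D A := by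
      simp [evS, M, uE, uSmatM_smul]
    rw [map_sub, map_mul, hEM] at h
    exact sub_eq_zero.1 h
  have hA : ∃ i j, A i j ≠ 0 := by
    by_contra hcon
    push Not at hcon
    have h2 := Matrix.mem_unitaryGroup_iff.1 (hU 2 le_rfl)
    have h0 : uMPO d D A 1 2 = 0 := by
      ext i j
      simp [uMPO, uProd, hcon, List.finRange_succ]
    rw [h0, zero_mul] at h2
    have i0 : Fin 2 → Fin d := fun _ => ⟨0, by omega⟩
    have := congrFun (congrFun h2 i0) i0
    simp at this
  obtain ⟨u, hu, M, hAM⟩ := tensor_factor d D hd A hA hS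
  have huu : ∀ j' j, ∑ i, star (u i j') * u i j = if j' = j then 1 else 0 := by
    intro j' j
    have := congrFun (congrFun (Matrix.mem_unitaryGroup_iff'.1 hu) j') j
    rw [Matrix.mul_apply, Matrix.one_apply] at this
    simpa [Matrix.star_apply] using this
  have hEM : uE d D A = (M.map (starRingEnd ℂ)) ⊗ₖ M := by
    ext ⟨a, c⟩ ⟨b, e⟩
    simp only [uE, uSmatM, Matrix.smul_apply, Matrix.sum_apply, Matrix.kroneckerMap_apply,
      Matrix.map_apply, hAM, smul_eq_mul, Matrix.one_apply]
    rw [Finset.sum_comm]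
    have h1 : ∀ j : Fin d, ∑ i : Fin d, ∑ j' : Fin d, (if j' = j then (1 : ℂ) else 0) *
        ((starRingEnd ℂ) (u i j' * M a b) * (u i j * M c e))
        = (starRingEnd ℂ) (M a b) * M c e := by
      intro j
      have h2 : ∀ i : Fin d, ∑ j' : Fin d, (if j' = j then (1 : ℂ) else 0) *
        ((starRingEnd ℂ) (u i j' * M a b) * (u i j * M c e))
        = (star (u i j) * u i j) * ((starRingEnd ℂ) (M a b) * M c e) := by
        intro i
        simp only [ite_mul, one_mul, zero_mul, Finset.sum_ite_eq',
          Finset.mem_univ, if_true, map_mul]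
        rw [Complex.star_def]
        ring
      simp only [h2]
      rw [← Finset.sum_mul, huu]
      simp
    simp only [h1]
    simp [hd0]
  have hMM : ∀ a b c e, star ((M * M) a b) * (M * M) c e = star (M a b) * M c e := by
    intro a b c e
    have h := hEid
    rw [hEM, ← Matrix.mul_kronecker_mul, ← Matrix.map_mul] at h
    exact congrFun (congrFun h (a, c)) (b, e)
  obtain ⟨a, b, hab⟩ : ∃ a b, M a b ≠ 0 := by
    by_contra hcon
    push Not at hcon
    obtain ⟨i, j, hij⟩ := hA
    apply hij
    rw [hAM]
    ext a b
    simp [hcon]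
  have hab2 : (M * M) a b ≠ 0 := by
    intro h0
    have := hMM a b a b
    rw [h0, mul_zero] at this
    have h1 : star (M a b) ≠ 0 := star_ne_zero.2 hab
    exact mul_ne_zero h1 hab this.symm
  set c : ℂ := star (M a b) / star ((M * M) a b) with hc
  have hc1 : star c * c = 1 := by
    have h1 : star ((M * M) a b) ≠ 0 := star_ne_zero.2 hab2
    have h2 : star (M a b) ≠ 0 := star_ne_zero.2 hab
    have h := hMM a b a b
    rw [hc, star_div₀, star_star, star_star]
    field_simp
    linear_combination -h
  have hc0 : c ≠ 0 := by
    intro h; rw [h, mul_zero] at hc1; exact zero_ne_one hc1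
  have hM2 : M * M = c • M := by
    ext x y
    have h1 : star ((M * M) a b) ≠ 0 := star_ne_zero.2 hab2
    rw [Matrix.smul_apply, smul_eq_mul, hc]
    have h := hMM a b x y
    field_simp
    linear_combination h
  have hPid : IsIdempotentElem (c⁻¹ • M) := by
    rw [IsIdempotentElem, Matrix.smul_mul, Matrix.mul_smul, hM2, smul_smul c⁻¹ c,
      inv_mul_cancel₀ hc0, one_smul]
  obtain ⟨t, ht⟩ : ∃ t : ℕ, M.trace = c * t := by
    have h2 : IsIdempotentElem (Matrix.toLin' (c⁻¹ • M)) := by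
      rw [IsIdempotentElem, Module.End.mul_eq_comp, ← Matrix.toLin'_mul, hPid]
    have h3 := (LinearMap.IsIdempotentElem.isProj_range _ h2).trace
    rw [Matrix.trace_toLin'_eq, Matrix.trace_smul, smul_eq_mul] at h3
    refine ⟨Module.finrank ℂ (LinearMap.range (Matrix.toLin' (c⁻¹ • M))), ?_⟩
    rw [← h3, ← mul_assoc, mul_inv_cancel₀ hc0, one_mul]
  have ht1 : t = 1 := by
    have h := trace_word d D A 2 (hU 2 le_rfl) (fun _ => (d : ℂ)⁻¹ • 1)
    simp only [uSmatM_smul] at h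
    change (List.ofFn (fun _ : Fin 2 => uE d D A)).prod.trace = _ at h
    simp only [List.ofFn_succ, List.ofFn_zero, List.prod_cons, List.prod_nil, mul_one, hEid] at h
    rw [hEM, Matrix.trace_kronecker] at h
    have h1 : (M.map (starRingEnd ℂ)).trace = star M.trace := by simp [Matrix.trace]
    rw [h1, ht] at h
    simp [Matrix.trace_smul, Matrix.trace_one, hd0] at h
    have h2 : ((t * t : ℕ) : ℂ) = 1 := by
      rw [← Complex.star_def] at h
      push_cast
      linear_combination h - (t : ℂ) * t * hc1
    have h3 : t * t = 1 := by exact_mod_cast h2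
    exact Nat.eq_one_of_mul_eq_one_left h3
  have hpow : ∀ N : ℕ, 1 ≤ N → (M ^ N).trace = c ^ N := by
    intro N hN
    have h1 : ∀ k : ℕ, M ^ (k + 1) = c ^ k • M := by
      intro k
      induction k with
      | zero => simp
      | succ k ih => rw [pow_succ, ih, Matrix.smul_mul, hM2, smul_smul, pow_succ]
    obtain ⟨k, rfl⟩ : ∃ k, N = k + 1 := ⟨N - 1, by omega⟩
    rw [h1, Matrix.trace_smul, ht, ht1, smul_eq_mul, pow_succ]
    simp
  refine ⟨1, le_rfl, 0, Matrix.of fun i j => c * u (i 0) (j 0), ?_, ?_⟩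
  · rw [Matrix.mem_unitaryGroup_iff']
    ext j' j
    rw [Matrix.mul_apply, Matrix.one_apply]
    simp only [Matrix.star_apply, Matrix.of_apply, star_mul]
    have h1 : ∀ i : Fin 1 → Fin d, star (u (i 0) (j' 0)) * star c * (c * u (i 0) (j 0))
        = star (u (i 0) (j' 0)) * u (i 0) (j 0) := by
      intro i
      linear_combination (star (u (i 0) (j' 0)) * u (i 0) (j 0)) * hc1
    simp only [h1]
    have h2 : ∑ i : Fin 1 → Fin d, star (u (i 0) (j' 0)) * u (i 0) (j 0)
        = ∑ k, star (u k (j' 0)) * u k (j 0) :=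
      Fintype.sum_equiv (Equiv.funUnique (Fin 1) (Fin d)) _ _ (fun i => rfl)
    refine h2.trans ?_
    rw [huu]
    have : (j' 0 = j 0) ↔ j' = j := by
      constructor
      · intro h; funext k; rw [Subsingleton.elim k 0]; exact h
      · intro h; rw [h]
    simp only [this]
  · intro N hN i j
    have h1 : uMPO d D A 1 (N * 1) i j = (∏ k, u (i k) (j k)) * c ^ N := by
      simp only [uMPO, Matrix.of_apply, one_mul]
      rw [uProd_factor d D A u M hAM, Matrix.trace_smul, hpow _ (by omega), smul_eq_mul]
      congr 2
      exact mul_one N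
    rw [h1]
    simp only [Matrix.of_apply, Finset.prod_mul_distrib, Finset.prod_const, Finset.card_univ,
      Fintype.card_fin]
    rw [← Equiv.prod_comp finProdFinEquiv (fun k => u (i k) (j k)), Fintype.prod_prod_type]
    simp
    ring

end
end

section
/- Let ℰ : M_2(ℂ) → M_2(ℂ) be a quantum channel with Kraus rank at most 2, i.e., ℰ(X) = K_1 X K_1† + K_2 X K_2† for some K_1, K_2 ∈ M_2(ℂ) with K_1†K_1 + K_2†K_2 = 𝟙_2. Suppose (i) the determinant of ℰ, viewed as a linear endomorphism of the 4-dimensional complex vector space M_2(ℂ), is zero, and (ii) there exists a positive semidefinite ρ ∈ M_2(ℂ) with Tr ρ = 1 such that ℰ(ρ) = 𝟙_2/2. Then ℰ is the completely dephasing channel up to local unitaries: there exist unitaries V, W ∈ U(2) such that W ℰ(V X V†) W† = (1/2) X + (1/2) σ_z X σ_z for every X ∈ M_2(ℂ), where σ_z = diag(1, −1). -/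
open Matrix
open scoped ComplexOrder

noncomputable section

/-- The quantum channel `X ↦ K₁ X K₁† + K₂ X K₂†` as a `ℂ`-linear endomorphism of
`M_2(ℂ)`. -/
def qchanL (K1 K2 : Matrix (Fin 2) (Fin 2) ℂ) :
    Matrix (Fin 2) (Fin 2) ℂ →ₗ[ℂ] Matrix (Fin 2) (Fin 2) ℂ :=
  (LinearMap.mulLeft ℂ K1).comp (LinearMap.mulRight ℂ K1ᴴ) +
    (LinearMap.mulLeft ℂ K2).comp (LinearMap.mulRight ℂ K2ᴴ)

/-- The Pauli matrix `σ_z`. -/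
def sigmaZ : Matrix (Fin 2) (Fin 2) ℂ := !![1, 0; 0, -1]

theorem q_apply (K1 K2 X : Matrix (Fin 2) (Fin 2) ℂ) :
    qchanL K1 K2 X = K1 * X * K1ᴴ + K2 * X * K2ᴴ := by
  simp [qchanL, Matrix.mul_assoc]

theorem herm_diag (H : Matrix (Fin 2) (Fin 2) ℂ) (hH : H.IsHermitian) (ht : H.trace = 0)
    (h0 : H ≠ 0) : ∃ (V : Matrix (Fin 2) (Fin 2) ℂ) (t : ℝ), V ∈ unitaryGroup (Fin 2) ℂ ∧
      t ≠ 0 ∧ H = (t : ℂ) • (V * sigmaZ * Vᴴ) := by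
  have hs := hH.spectral_theorem
  have htr := hH.trace_eq_sum_eigenvalues
  rw [ht, Fin.sum_univ_two] at htr
  have h1 : hH.eigenvalues 1 = - hH.eigenvalues 0 := by
    have : ((hH.eigenvalues 0 + hH.eigenvalues 1 : ℝ) : ℂ) = 0 := by
      push_cast; exact htr.symm
    have := Complex.ofReal_eq_zero.mp this
    linarith
  have hd : H = ((hH.eigenvalues 0 : ℝ) : ℂ) • ((hH.eigenvectorUnitary : Matrix (Fin 2) (Fin 2) ℂ) * sigmaZ * (hH.eigenvectorUnitary : Matrix (Fin 2) (Fin 2) ℂ)ᴴ) := by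
    conv_lhs => rw [hs]
    have : diagonal (RCLike.ofReal ∘ hH.eigenvalues) = ((hH.eigenvalues 0 : ℝ) : ℂ) • sigmaZ := by
      ext i j
      fin_cases i <;> fin_cases j <;> simp [sigmaZ, h1]
    rw [this, Unitary.conjStarAlgAut_apply]
    simp [Matrix.mul_assoc, star_eq_conjTranspose]
  refine ⟨_, _, hH.eigenvectorUnitary.2, ?_, hd⟩
  intro h
  rw [h] at hd
  simp at hd
  exact h0 hd

theorem sq_traceless (A : Matrix (Fin 2) (Fin 2) ℂ) (h : A.trace = 0) :
    A * A = (-A.det) • 1 := by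
  rw [trace_fin_two] at h
  have h1 : A 1 1 = - A 0 0 := by linear_combination h
  ext i j
  fin_cases i <;> fin_cases j <;> simp [mul_apply, det_fin_two, h1] <;> ring

theorem sigmaZ_sq : sigmaZ * sigmaZ = 1 := by
  ext i j
  fin_cases i <;> fin_cases j <;> simp [sigmaZ, mul_apply]

theorem unit_diag (U : Matrix (Fin 2) (Fin 2) ℂ) (hU : U * Uᴴ = 1) (ht : U.trace = 0) :
    ∃ (Y : Matrix (Fin 2) (Fin 2) ℂ) (z : ℂ), Y ∈ unitaryGroup (Fin 2) ℂ ∧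
      star z * z = 1 ∧ U = z • (Y * sigmaZ * Yᴴ) := by
  have hsq := sq_traceless U ht
  obtain ⟨z, hz⟩ : ∃ z : ℂ, -U.det = z ^ 2 := by
    obtain ⟨z, hz⟩ := IsAlgClosed.exists_pow_nat_eq (-U.det) (n := 2) (by norm_num)
    exact ⟨z, hz.symm⟩
  have hdet : U.det * star U.det = 1 := by
    have := congrArg Matrix.det hU
    rwa [det_mul, det_conjTranspose, det_one] at this
  have hz1 : star z * z = 1 := by
    have h1 : (star z * z)^2 = 1 := by
      rw [mul_pow, ← star_pow, ← hz, star_neg]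
      linear_combination hdet
    have h2 : star z * z = ((Complex.normSq z : ℝ) : ℂ) := by
      rw [mul_comm]; exact Complex.mul_conj z
    rw [h2] at h1 ⊢
    norm_cast at h1 ⊢
    nlinarith [Complex.normSq_nonneg z]
  have hNN : U * U = (z^2) • 1 := by rw [hsq, hz]
  have hUh : U = (z^2) • Uᴴ := by
    calc U = U * (U * Uᴴ) := by rw [hU, mul_one]
      _ = (z^2) • Uᴴ := by rw [← mul_assoc, hNN]; simp
  have hN : (star z • U).IsHermitian := by
    rw [IsHermitian, conjTranspose_smul, star_star]
    conv_rhs => rw [hUh, smul_smul]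
    congr 1
    linear_combination -z * hz1
  have hn0 : star z • U ≠ 0 := by
    intro h
    have : U = 0 := by
      calc U = (z * star z) • U := by rw [mul_comm, hz1, one_smul]
        _ = 0 := by rw [mul_smul, h, smul_zero]
    simp [this] at hU
  obtain ⟨Y, t, hY, ht0, hYt⟩ := herm_diag _ hN (by simp [ht]) hn0
  have hYY : Yᴴ * Y = 1 := (mem_unitaryGroup_iff').mp hY
  have hYY' : Y * Yᴴ = 1 := (mem_unitaryGroup_iff).mp hY
  have hUU : U = (z * t) • (Y * sigmaZ * Yᴴ) := by
    calc U = (z * star z) • U := by rw [mul_comm, hz1, one_smul]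
        _ = _ := by rw [mul_smul, hYt, smul_smul]
  have ht1 : (t:ℂ)^2 = 1 := by
    have h1 : (Y * sigmaZ * Yᴴ) * (Y * sigmaZ * Yᴴ) = 1 := by
      calc _ = Y * sigmaZ * (Yᴴ * Y) * sigmaZ * Yᴴ := by simp only [mul_assoc]
        _ = Y * (sigmaZ * sigmaZ) * Yᴴ := by rw [hYY]; simp only [mul_assoc, mul_one, one_mul]
        _ = 1 := by rw [sigmaZ_sq, mul_one, hYY']
    rw [hUU, smul_mul_smul_comm, h1] at hNN
    have := congrFun (congrFun hNN 0) 0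
    simp at this
    have hz0 : z ≠ 0 := by rintro rfl; simp at hz1
    have : z^2 * ((t:ℂ)^2 - 1) = 0 := by linear_combination this
    rcases mul_eq_zero.mp this with h | h
    · exact absurd h (pow_ne_zero _ hz0)
    · linear_combination h
  refine ⟨Y, z * t, hY, ?_, hUU⟩
  have : star (t:ℂ) = t := Complex.conj_ofReal t
  rw [star_mul, this]
  linear_combination (t:ℂ)^2 * hz1 + ht1

theorem S_half (S : Matrix (Fin 2) (Fin 2) ℂ) (hS : S.IsHermitian) (ht : S.trace = 1) (k : ℂ)
    (h4 : S * S * (S * S) = k • 1) : S = (2:ℂ)⁻¹ • 1 := by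
  rw [trace_fin_two] at ht
  have h11 : S 1 1 = 1 - S 0 0 := by linear_combination ht
  have h10 : S 1 0 = star (S 0 1) := (hS.apply 1 0).symm
  have h00 : S 0 0 = ((S 0 0).re : ℂ) := (Complex.conj_eq_iff_re.mp (hS.apply 0 0)).symm
  have hd : (1 : ℂ) - 2 * S.det ≠ 0 := by
    have : (1 : ℂ) - 2 * S.det = ((1 - 2 * ((S 0 0).re * (1 - (S 0 0).re) - Complex.normSq (S 0 1)) : ℝ) : ℂ) := by
      have hc : S 0 1 * star (S 0 1) = ((Complex.normSq (S 0 1) : ℝ):ℂ) := Complex.mul_conj _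
      rw [det_fin_two, h11, h10, hc]
      push_cast
      rw [← h00]
    rw [this]
    norm_cast
    nlinarith [Complex.normSq_nonneg (S 0 1), sq_nonneg ((S 0 0).re - 1/2)]
  have e01 := congrFun (congrFun h4 0) 1
  have e10 := congrFun (congrFun h4 1) 0
  have e00 := congrFun (congrFun h4 0) 0
  have e11 := congrFun (congrFun h4 1) 1
  simp [mul_apply] at e01 e10 e00 e11
  rw [det_fin_two] at hd
  rw [h11] at e01 e10 e00 e11 hd
  have f01 : S 0 1 = 0 := by
    apply (mul_eq_zero.mp (_ : (1 - 2 * (S 0 0 * (1 - S 0 0) - S 0 1 * S 1 0)) * S 0 1 = 0)).resolve_left hd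
    linear_combination e01
  have f10 : S 1 0 = 0 := by
    apply (mul_eq_zero.mp (_ : (1 - 2 * (S 0 0 * (1 - S 0 0) - S 0 1 * S 1 0)) * S 1 0 = 0)).resolve_left hd
    linear_combination e10
  have f00 : S 0 0 - (1 - S 0 0) = 0 := by
    apply (mul_eq_zero.mp (_ : (1 - 2 * (S 0 0 * (1 - S 0 0) - S 0 1 * S 1 0)) * (S 0 0 - (1 - S 0 0)) = 0)).resolve_left hd
    linear_combination e00 - e11
  ext i j
  fin_cases i <;> fin_cases j <;> simp [f01, f10, h11]
  · linear_combination f00 / 2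
  · linear_combination -f00 / 2

/-- Decomposition of the channel in terms of the column matrices. -/
theorem q_cols (K1 K2 X : Matrix (Fin 2) (Fin 2) ℂ)
    (P Q : Matrix (Fin 2) (Fin 2) ℂ)
    (hP : P = !![K1 0 0, K2 0 0; K1 1 0, K2 1 0])
    (hQ : Q = !![K1 0 1, K2 0 1; K1 1 1, K2 1 1]) :
    qchanL K1 K2 X = X 0 0 • (P * Pᴴ) + X 0 1 • (P * Qᴴ) + X 1 0 • (Q * Pᴴ)
      + X 1 1 • (Q * Qᴴ) := by
  rw [q_apply, hP, hQ]
  ext i j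
  fin_cases i <;> fin_cases j <;>
    simp [mul_apply, Fin.sum_univ_two, vecMul, dotProduct] <;> ring

/-- The Hermitian kernel element. -/
theorem ker_herm (K1 K2 : Matrix (Fin 2) (Fin 2) ℂ)
    (hTP : K1ᴴ * K1 + K2ᴴ * K2 = 1)
    (hdet : LinearMap.det (qchanL K1 K2) = 0) :
    ∃ H : Matrix (Fin 2) (Fin 2) ℂ, H.IsHermitian ∧ H.trace = 0 ∧ H ≠ 0 ∧
      qchanL K1 K2 H = 0 := by
  have htr : ∀ X, (qchanL K1 K2 X).trace = X.trace := by
    intro X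
    rw [q_apply, trace_add, trace_mul_cycle, trace_mul_cycle K2, ← trace_add, ← add_mul, hTP,
      one_mul]
  have hbot := (LinearMap.bot_lt_ker_of_det_eq_zero hdet).ne'
  obtain ⟨X, hX, hX0⟩ := Submodule.exists_mem_ne_zero_of_ne_bot hbot
  rw [LinearMap.mem_ker] at hX
  have hXh : qchanL K1 K2 Xᴴ = 0 := by
    have := congrArg conjTranspose hX
    rw [q_apply] at this ⊢
    simpa [mul_assoc] using this
  have key : ∀ H, H.IsHermitian → H ≠ 0 → qchanL K1 K2 H = 0 →
      ∃ H : Matrix (Fin 2) (Fin 2) ℂ, H.IsHermitian ∧ H.trace = 0 ∧ H ≠ 0 ∧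
      qchanL K1 K2 H = 0 := fun H h1 h2 h3 =>
    ⟨H, h1, by rw [← htr, h3, trace_zero], h2, h3⟩
  by_cases h : X + Xᴴ = 0
  · refine key (Complex.I • X) ?_ ?_ ?_
    · rw [IsHermitian, conjTranspose_smul, eq_neg_of_add_eq_zero_right h]
      simp
    · simp [hX0]
    · rw [map_smul, hX, smul_zero]
  · refine key (X + Xᴴ) ?_ h ?_
    · rw [IsHermitian, conjTranspose_add, conjTranspose_conjTranspose, add_comm]
    · rw [map_add, hX, hXh, add_zero]

/-- The main algebraic step. -/
theorem PQ_step (P Q : Matrix (Fin 2) (Fin 2) ℂ) (x y : ℂ)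
    (hPQ : P * Pᴴ = Q * Qᴴ) (h1 : (Pᴴ * P).trace = 1) (h0 : (Pᴴ * Q).trace = 0)
    (hr : P * Pᴴ + x • (P * Qᴴ) + y • (Q * Pᴴ) = (2:ℂ)⁻¹ • 1) :
    Pᴴ * P = (2:ℂ)⁻¹ • 1 ∧ ∃ U, Q = P * U ∧ U * Uᴴ = 1 ∧ U.trace = 0 := by
  have hPdet : IsUnit P.det := by
    rw [isUnit_iff_ne_zero]
    intro hd
    have hd' : (Pᴴ).det = 0 := by rw [det_conjTranspose, hd, star_zero]
    obtain ⟨v, hv, hPv⟩ := exists_mulVec_eq_zero_iff.mpr hd'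
    have hQv : Qᴴ *ᵥ v = 0 := by
      rw [← self_mul_conjTranspose_mulVec_eq_zero, ← hPQ, ← mulVec_mulVec, hPv, mulVec_zero]
    have := congrArg (fun M => M *ᵥ v) hr
    simp [add_mulVec, smul_mulVec, ← mulVec_mulVec, hPv, hQv] at this
    exact hv (by simpa using this.symm)
  have hPi : P * P⁻¹ = 1 := mul_nonsing_inv _ hPdet
  have hiP : P⁻¹ * P = 1 := nonsing_inv_mul _ hPdet
  have hPi' : Pᴴ * (P⁻¹)ᴴ = 1 := by rw [← conjTranspose_mul, hiP, conjTranspose_one]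
  obtain ⟨U, hU⟩ : ∃ U, U = P⁻¹ * Q := ⟨_, rfl⟩
  have hQ : Q = P * U := by rw [hU, ← mul_assoc, hPi, one_mul]
  have hUU : U * Uᴴ = 1 := by
    rw [hU, conjTranspose_mul]
    calc P⁻¹ * Q * (Qᴴ * (P⁻¹)ᴴ) = P⁻¹ * (Q * Qᴴ) * (P⁻¹)ᴴ := by simp only [mul_assoc]
      _ = (P⁻¹ * P) * (Pᴴ * (P⁻¹)ᴴ) := by rw [← hPQ]; simp only [mul_assoc]
      _ = 1 := by rw [hiP, hPi', one_mul]
  have hUU' : Uᴴ * U = 1 := mul_eq_one_comm.mp hUU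
  obtain ⟨M, hM⟩ : ∃ M, M = 1 + x • Uᴴ + y • U := ⟨_, rfl⟩
  have hMU : M * U = U * M := by
    rw [hM]; simp [add_mul, mul_add, hUU, hUU']
  have hPM : P * (M * Pᴴ) = (2:ℂ)⁻¹ • 1 := by
    rw [← hr, hQ, hM]
    simp [add_mul, mul_add, mul_assoc]
  obtain ⟨S, hSdef⟩ : ∃ S, S = Pᴴ * P := ⟨_, rfl⟩
  have hMS' : ((2:ℂ) • M) * S = 1 := by
    have : ((2:ℂ) • (M * Pᴴ)) * P = 1 := by
      rw [mul_eq_one_comm, Matrix.mul_smul, hPM, smul_smul]; norm_num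
    rw [hSdef, ← mul_assoc]; simpa using this
  have hSM : S * ((2:ℂ) • M) = 1 := mul_eq_one_comm.mp hMS'
  have hMU2 : ((2:ℂ) • M) * U = U * ((2:ℂ) • M) := by simp [hMU]
  have hSU : S * U = U * S := by
    calc S * U = S * U * (((2:ℂ) • M) * S) := by rw [hMS', mul_one]
      _ = S * (U * ((2:ℂ) • M)) * S := by simp only [mul_assoc]
      _ = (S * ((2:ℂ) • M)) * U * S := by rw [← hMU2]; simp only [mul_assoc]
      _ = U * S := by rw [hSM, one_mul]
  have hSh : S.IsHermitian := by rw [hSdef]; exact isHermitian_conjTranspose_mul_self P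
  have htS : (S * U).trace = 0 := by rw [hSdef, mul_assoc, ← hQ, h0]
  have hsq := sq_traceless _ htS
  have h4 : S * S * (S * S) = ((-(S * U).det) * star (-(S * U).det)) • 1 := by
    have e1 : S * U * (S * U) = S * S * U * U := by
      rw [mul_assoc, ← mul_assoc U, ← hSU]; simp only [mul_assoc]
    have e2 : (S * U * (S * U)) * (S * U * (S * U))ᴴ = S * S * (S * S) := by
      rw [e1]
      simp only [conjTranspose_mul, hSh.eq]
      calc S * S * U * U * (Uᴴ * (Uᴴ * (S * S))) = S * S * U * (U * Uᴴ) * Uᴴ * (S * S) := by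
            simp only [mul_assoc]
        _ = S * S * (U * Uᴴ) * (S * S) := by rw [hUU, mul_one, mul_assoc (S * S) U, hUU]
        _ = _ := by rw [hUU, mul_one]
    rw [← e2, hsq, conjTranspose_smul, conjTranspose_one, smul_mul_smul_comm, one_mul]
  have hS := S_half S hSh (by rw [hSdef, h1]) _ h4
  refine ⟨by rw [← hSdef, hS], U, hQ, hUU, ?_⟩
  rw [hS] at htS
  simpa using htS

theorem stmt_12 (K1 K2 : Matrix (Fin 2) (Fin 2) ℂ)
    (hTP : K1ᴴ * K1 + K2ᴴ * K2 = 1)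
    (hdet : LinearMap.det (qchanL K1 K2) = 0)
    (hρ : ∃ ρ : Matrix (Fin 2) (Fin 2) ℂ, ρ.PosSemidef ∧ ρ.trace = 1 ∧
      qchanL K1 K2 ρ = ((2 : ℂ))⁻¹ • 1) :
    ∃ V W : Matrix (Fin 2) (Fin 2) ℂ,
      V ∈ Matrix.unitaryGroup (Fin 2) ℂ ∧ W ∈ Matrix.unitaryGroup (Fin 2) ℂ ∧
      ∀ X : Matrix (Fin 2) (Fin 2) ℂ,
        W * (qchanL K1 K2 (V * X * Vᴴ)) * Wᴴ =
          ((2 : ℂ))⁻¹ • X + ((2 : ℂ))⁻¹ • (sigmaZ * X * sigmaZ) := by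
  obtain ⟨ρ, -, hρt, hρ⟩ := hρ
  obtain ⟨H, hH, hHt, hH0, hHk⟩ := ker_herm K1 K2 hTP hdet
  obtain ⟨V, t, hV, ht0, hHV⟩ := herm_diag H hH hHt hH0
  have hVV : Vᴴ * V = 1 := (mem_unitaryGroup_iff').mp hV
  have hVV' : V * Vᴴ = 1 := (mem_unitaryGroup_iff).mp hV
  have hconj : ∀ X, qchanL K1 K2 (V * X * Vᴴ) = qchanL (K1 * V) (K2 * V) X := by
    intro X
    simp only [q_apply, conjTranspose_mul, mul_assoc]
  have hTP' : (K1 * V)ᴴ * (K1 * V) + (K2 * V)ᴴ * (K2 * V) = 1 := by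
    calc _ = Vᴴ * (K1ᴴ * K1 + K2ᴴ * K2) * V := by
          simp only [conjTranspose_mul, mul_assoc, mul_add, add_mul]
      _ = 1 := by rw [hTP, mul_one, hVV]
  obtain ⟨L1, hL1⟩ : ∃ L, L = K1 * V := ⟨_, rfl⟩
  obtain ⟨L2, hL2⟩ : ∃ L, L = K2 * V := ⟨_, rfl⟩
  rw [← hL1, ← hL2] at hTP'
  simp only [← hL1, ← hL2] at hconj
  obtain ⟨P, hP⟩ : ∃ P, P = !![L1 0 0, L2 0 0; L1 1 0, L2 1 0] := ⟨_, rfl⟩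
  obtain ⟨Q, hQ⟩ : ∃ Q, Q = !![L1 0 1, L2 0 1; L1 1 1, L2 1 1] := ⟨_, rfl⟩
  have hcol := fun X => q_cols L1 L2 X P Q hP hQ
  have hPQ : P * Pᴴ = Q * Qᴴ := by
    rw [hHV, map_smul, hconj, hcol] at hHk
    have := (smul_eq_zero.mp hHk).resolve_left (by exact_mod_cast ht0)
    simp [sigmaZ] at this
    exact add_neg_eq_zero.mp this
  have h1 : (Pᴴ * P).trace = 1 := by
    have := congrFun (congrFun hTP' 0) 0
    simp [mul_apply] at this
    rw [hP, ← this]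
    simp [trace_fin_two, mul_apply]
  have h0 : (Pᴴ * Q).trace = 0 := by
    have := congrFun (congrFun hTP' 0) 1
    simp [mul_apply] at this
    rw [hP, hQ, ← this]
    simp [trace_fin_two, mul_apply]
  have hr : P * Pᴴ + (Vᴴ * ρ * V) 0 1 • (P * Qᴴ) + (Vᴴ * ρ * V) 1 0 • (Q * Pᴴ)
      = (2:ℂ)⁻¹ • 1 := by
    have e : V * (Vᴴ * ρ * V) * Vᴴ = ρ := by
      calc _ = (V * Vᴴ) * ρ * (V * Vᴴ) := by simp only [mul_assoc]
        _ = ρ := by rw [hVV', one_mul, mul_one]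
    have e2 : (Vᴴ * ρ * V).trace = 1 := by
      rw [trace_mul_cycle, hVV', one_mul, hρt]
    rw [trace_fin_two] at e2
    rw [← hρ, ← e, hconj, hcol, ← hPQ, e]
    have : P * Pᴴ = ((Vᴴ * ρ * V) 0 0 + (Vᴴ * ρ * V) 1 1) • (P * Pᴴ) := by rw [e2, one_smul]
    conv_lhs => rw [this]
    module
  obtain ⟨hPP, U, hQU, hUU, hUt⟩ := PQ_step P Q _ _ hPQ h1 h0 hr
  obtain ⟨Y, z, hY, hz, hUY⟩ := unit_diag U hUU hUt
  have hYY : Yᴴ * Y = 1 := (mem_unitaryGroup_iff').mp hY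
  have hYY' : Y * Yᴴ = 1 := (mem_unitaryGroup_iff).mp hY
  obtain ⟨r, hr2, hrs⟩ : ∃ r : ℂ, r * r = 2 ∧ star r = r := by
    refine ⟨((Real.sqrt 2 : ℝ) : ℂ), ?_, Complex.conj_ofReal _⟩
    norm_cast
    exact Real.mul_self_sqrt (by norm_num)
  have hr0 : r ≠ 0 := by rintro rfl; norm_num at hr2
  obtain ⟨D, hD⟩ : ∃ D : Matrix (Fin 2) (Fin 2) ℂ, D = (r / 2) • !![1, 1; star z, -star z] := ⟨_, rfl⟩
  have hc2 : (starRingEnd ℂ) 2 = 2 := map_ofNat _ 2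
  have hrs' : (starRingEnd ℂ) r = r := hrs
  have hz' : (starRingEnd ℂ) z * z = 1 := hz
  have hDD : D ∈ unitaryGroup (Fin 2) ℂ := by
    rw [mem_unitaryGroup_iff, hD]
    ext i j
    fin_cases i <;> fin_cases j <;> simp [mul_apply, star_eq_conjTranspose, hrs', hc2]
    · linear_combination hr2 / 2
    · linear_combination r * r / 2 * hz' + hr2 / 2
  have hPY : (r • (P * Y)) ∈ unitaryGroup (Fin 2) ℂ := by
    rw [mem_unitaryGroup_iff', star_eq_conjTranspose, conjTranspose_smul, conjTranspose_mul,
      smul_mul_smul_comm, hrs, hr2]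
    calc _ = (2:ℂ) • (Yᴴ * (Pᴴ * P) * Y) := by simp only [mul_assoc]
      _ = 1 := by rw [hPP]; simp [hYY]
  obtain ⟨G, hG⟩ : ∃ G, G = r • (P * Y) := ⟨_, rfl⟩
  rw [← hG] at hPY
  have hGG : Gᴴ * G = 1 := (mem_unitaryGroup_iff').mp hPY
  refine ⟨V * D, Gᴴ, mul_mem hV hDD, Unitary.star_mem hPY, fun X => ?_⟩
  have hX : V * D * X * (V * D)ᴴ = V * (D * X * Dᴴ) * Vᴴ := by
    simp only [conjTranspose_mul, mul_assoc]
  have hPG : P = (r/2) • (G * Yᴴ) := by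
    rw [hG, smul_mul_assoc, mul_assoc, hYY', mul_one, smul_smul]
    rw [show r / 2 * r = 1 by linear_combination hr2 / 2, one_smul]
  have hQG : Q = (r/2 * z) • (G * sigmaZ * Yᴴ) := by
    rw [hQU, hUY, hPG, smul_mul_smul_comm]
    congr 1
    calc G * Yᴴ * (Y * sigmaZ * Yᴴ) = G * (Yᴴ * Y) * sigmaZ * Yᴴ := by simp only [mul_assoc]
      _ = _ := by rw [hYY, mul_one]
  have hsz : sigmaZᴴ = sigmaZ := by
    ext i j
    fin_cases i <;> fin_cases j <;> simp [sigmaZ]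
  have hrr : r / 2 * (r / 2) = 1/2 := by linear_combination hr2 / 4
  have hr2s : star (r / 2) = r / 2 := by simp [hrs']
  have c1 : Gᴴ * (P * Pᴴ) * G = (1/2 : ℂ) • 1 := by
    rw [hPG, conjTranspose_smul, smul_mul_smul_comm, hr2s, hrr, Matrix.mul_smul, Matrix.smul_mul]
    congr 1
    simp only [conjTranspose_mul, conjTranspose_conjTranspose]
    calc _ = (Gᴴ * G) * (Yᴴ * Y) * (Gᴴ * G) := by simp only [mul_assoc]
      _ = 1 := by simp only [hGG, hYY, mul_one]
  have c2 : Gᴴ * (P * Qᴴ) * G = (1/2 * star z : ℂ) • sigmaZ := by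
    rw [hPG, hQG, conjTranspose_smul, smul_mul_smul_comm, star_mul, hr2s, Matrix.mul_smul, Matrix.smul_mul]
    rw [show r / 2 * (star z * (r/2)) = 1/2 * star z by linear_combination star z * hrr]
    congr 1
    simp only [conjTranspose_mul, conjTranspose_conjTranspose, hsz]
    calc _ = (Gᴴ * G) * (Yᴴ * Y) * sigmaZ * (Gᴴ * G) := by simp only [mul_assoc]
      _ = _ := by simp only [hGG, hYY, mul_one, one_mul]
  have c3 : Gᴴ * (Q * Pᴴ) * G = (1/2 * z : ℂ) • sigmaZ := by
    rw [hPG, hQG, conjTranspose_smul, smul_mul_smul_comm, hr2s, Matrix.mul_smul, Matrix.smul_mul]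
    rw [show r / 2 * z * (r/2) = 1/2 * z by linear_combination z * hrr]
    congr 1
    simp only [conjTranspose_mul, conjTranspose_conjTranspose]
    calc _ = (Gᴴ * G) * sigmaZ * (Yᴴ * Y) * (Gᴴ * G) := by simp only [mul_assoc]
      _ = _ := by simp only [hGG, hYY, mul_one, one_mul]
  rw [hX, hconj, hcol, ← hPQ, conjTranspose_conjTranspose]
  simp only [mul_add, add_mul, Matrix.mul_smul, Matrix.smul_mul, c1, c2, c3]
  have hDX : D * X * Dᴴ = (2:ℂ)⁻¹ • !![X 0 0 + X 0 1 + X 1 0 + X 1 1,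
      z * (X 0 0 - X 0 1 + X 1 0 - X 1 1); star z * (X 0 0 + X 0 1 - X 1 0 - X 1 1),
      X 0 0 - X 0 1 - X 1 0 + X 1 1] := by
    rw [hD, conjTranspose_smul, hr2s, Matrix.smul_mul, smul_mul_smul_comm, hrr, one_div]
    congr 1
    ext i j
    fin_cases i <;> fin_cases j <;>
      simp [mul_apply, Fin.sum_univ_two, vecMul, dotProduct]
    · ring
    · ring
    · ring
    · linear_combination (X 0 0 - X 0 1 - X 1 0 + X 1 1) * hz'
  rw [hDX]
  ext i j
  fin_cases i <;> fin_cases j <;>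
    simp [sigmaZ, mul_apply, Fin.sum_univ_two, vecMul, dotProduct]
  · linear_combination ((X 0 0 - X 1 1)/2) * hz'
  · linear_combination -((X 0 0 - X 1 1)/2) * hz'

end
end
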